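/- Let A be an m×k integer matrix with k > m, of maximum rank m over ℚ, irredundant, and satisfying the strong column condition, and assume q−1+h_B−m ≥ 1 for every B ⊆ {1,…,k} with |B| = q ≥ 2. Then for every β > 0 there exist constants C = C(A,β) and n₀ = n₀(A,β) such that for every n ≥ n₀ and every integer t ≥ C·n^{1−1/m_A}, the number of subsets F ⊆ {1,…,n} with |F| = t containing no x ∈ F^k with pairwise distinct coordinates satisfying Ax = 0 is at most C(⌊βn⌋, t). -/

import Mathlib

open Finset

attribute [local instance] Classical.propDecidable

/-- `h_B`: the rank over `ℚ` of the matrix obtained from `A` by deleting the columns indexed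
by `B`. -/
noncomputable def hRank {m k : ℕ} (A : Matrix (Fin m) (Fin k) ℤ) (B : Finset (Fin k)) : ℕ :=
  ((A.map (Int.cast : ℤ → ℚ)).submatrix id (fun j : {j : Fin k // j ∉ B} => (j : Fin k))).rank

/-- The Rödl–Ruciński parameter `m_A`. -/
noncomputable def mParam {m k : ℕ} (A : Matrix (Fin m) (Fin k) ℤ) : ℝ :=
  sSup {x : ℝ | ∃ B : Finset (Fin k), 2 ≤ B.card ∧
    x = ((B.card : ℝ) - 1) / ((B.card : ℝ) - 1 + (hRank A B : ℝ) - (m : ℝ))}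


def wLp {α ι : Type} (a : α) (z : ι → Option α) : ι → α := fun i => (z i).getD a
def wSub {β ι κ : Type} (σ : ι → β ⊕ κ) (x : κ → β) : ι → β := fun i => Sum.elim id x (σ i)
def wSubL {α ι κ : Type} (σ : ι → α ⊕ κ) (z : κ → Option α) : ι → Option α :=
  fun i => Sum.elim some z (σ i)
def wProper {β ι κ : Type} (σ : ι → β ⊕ κ) : Prop := ∀ e, ∃ i, σ i = Sum.inr e

/-- colour depends only on the prefix up to the first wildcard -/
def wFI {α K : Type} {m : ℕ} (χ : (Fin m → Option α) → K) : Prop :=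
  ∀ z z' : Fin m → Option α, ∀ j, z j = none → z' j = none →
    (∀ i < j, z i ≠ none ∧ z i = z' i) → χ z = χ z'

def wComp {α ι κ l : Type} (σ : ι → α ⊕ κ) (τ : κ → α ⊕ l) : ι → α ⊕ l :=
  fun i => Sum.elim Sum.inl τ (σ i)

theorem wComp_subL {α ι κ l : Type} (σ : ι → α ⊕ κ) (τ : κ → α ⊕ l) (z : l → Option α) :
    wSubL (wComp σ τ) z = wSubL σ (wSubL τ z) := by
  funext i
  simp only [wSubL, wComp]
  cases σ i <;> simp [wSubL]

theorem wComp_proper {α ι κ l : Type} {σ : ι → α ⊕ κ} {τ : κ → α ⊕ l} (h : wProper σ)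
    (h' : wProper τ) : wProper (wComp σ τ) := by
  intro e
  obtain ⟨j, hj⟩ := h' e
  obtain ⟨i, hi⟩ := h j
  exact ⟨i, by simp [wComp, hi, hj]⟩

theorem gr1 (α : Type) [Finite α] : ∀ (m : ℕ) (K : Type) [Finite K],
    ∃ (ι : Type) (_ : Fintype ι), ∀ χ : (ι → Option α) → K,
      ∃ σ : ι → α ⊕ Fin m, wProper σ ∧ wFI (fun z => χ (wSubL σ z)) := by
  intro m
  induction m with
  | zero =>
    intro K _
    refine ⟨PEmpty, inferInstance, fun χ => ⟨fun i => i.elim, fun e => e.elim0, ?_⟩⟩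
    intro z z' j
    exact j.elim0
  | succ m ih =>
    intro K _
    obtain ⟨R, hR, hRχ⟩ := ih (α → K)
    obtain ⟨ι', hι', h'⟩ :=
      Combinatorics.Subspace.exists_mono_in_high_dimension (Option α) K R
    refine ⟨Option ι', inferInstance, fun χ => ?_⟩
    obtain ⟨τ, c, hτ⟩ := h' (fun y => χ (fun o => o.elim none y))
    -- first parameter is `none : Option R`
    let σ : Option ι' → α ⊕ Option R := fun o => o.elim (Sum.inr none) (fun i =>
      Sum.elim (fun b : Option α => b.elim (Sum.inr none) Sum.inl) (fun e => Sum.inr (some e))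
        (τ.idxFun i))
    obtain ⟨ρ, hρ, hρF⟩ := hRχ (fun y a => χ (wSubL σ (fun o => o.elim (some a) y)))
    let ρ' : Option R → α ⊕ Fin (m+1) := fun o => o.elim (Sum.inr 0) (fun r =>
      Sum.elim Sum.inl (fun e => Sum.inr (Fin.succ e)) (ρ r))
    have hσ : wProper σ := by
      intro o
      cases o with
      | none => exact ⟨none, rfl⟩
      | some e =>
        obtain ⟨i, hi⟩ := τ.proper e
        exact ⟨some i, by simp [σ, hi]⟩
    have hρ' : wProper ρ' := by
      intro e
      refine Fin.cases ?_ (fun e => ?_) e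
      · exact ⟨none, rfl⟩
      · obtain ⟨i, hi⟩ := hρ e
        exact ⟨some i, by simp [ρ', hi]⟩
    have key : ∀ z : Fin (m+1) → Option α, wSubL ρ' z =
        fun o => o.elim (z 0) (wSubL ρ (fun e => z e.succ)) := by
      intro z
      funext o
      cases o with
      | none => simp [wSubL, ρ']
      | some r => 
        simp only [wSubL, ρ', Option.elim]
        cases ρ r <;> simp
    have key0 : ∀ y : R → Option α, χ (wSubL σ (fun o => o.elim none y)) = c := by
      intro y
      rw [← hτ y]
      congr 1
      funext o
      cases o with
      | none => simp [wSubL, σ]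
      | some i =>
        simp only [wSubL, σ, Option.elim, Combinatorics.Subspace.coe_apply]
        rcases h : τ.idxFun i with b | e
        · cases b <;> simp
        · simp
    refine ⟨wComp σ ρ', wComp_proper hσ hρ', ?_⟩
    intro z z' j hz hz' hj
    simp only [wComp_subL, key]
    induction j using Fin.cases with
    | zero => rw [hz, hz', key0, key0]
    | succ j =>
      obtain ⟨h1, h2⟩ := hj 0 (Fin.succ_pos j)
      rw [← h2]
      obtain ⟨a, ha⟩ := Option.ne_none_iff_exists'.1 h1
      rw [ha]
      have := hρF (fun e => z e.succ) (fun e => z' e.succ) j hz hz' (fun i hi =>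
        hj i.succ (Fin.succ_lt_succ_iff.2 hi))
      exact congrFun this a

theorem gr2 (α : Type) [Finite α] [Nonempty α] (K : Type) [Finite K] : ∀ (m : ℕ),
    ∃ M : ℕ, ∀ χ : (Fin M → Option α) → K, wFI χ →
      ∃ σ : Fin M → α ⊕ Fin m, wProper σ ∧ ∃ c : Fin m → K, ∀ z : Fin m → Option α, ∀ e,
        z e = none → (∀ i < e, z i ≠ none) → χ (wSubL σ z) = c e := by
  intro m
  induction m with
  | zero =>
    refine ⟨0, fun χ _ => ⟨fun i => i.elim0, fun e => e.elim0, fun e => e.elim0, fun z e => e.elim0⟩⟩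
  | succ m ih =>
    obtain ⟨R, hR⟩ := ih
    obtain ⟨ι, hι, h'⟩ :=
      Combinatorics.Line.exists_mono_in_high_dimension α ((Fin R → Option α) → K)
    let n := Fintype.card ι
    let eq : ι ≃ Fin n := Fintype.equivFin ι
    refine ⟨n + R, fun χ hχ => ?_⟩
    obtain ⟨l, c0, hl⟩ := h' (fun x q => χ (Fin.append (fun i => some (x (eq.symm i))) q))
    have a0 : α := Classical.arbitrary α
    obtain ⟨σ', hσ', c', hc'⟩ := hR c0 (by
      intro z z' j hz hz' hj
      rw [← hl a0]
      apply hχ _ _ (Fin.natAdd n j)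
      · simpa using hz
      · simpa using hz'
      · intro i hi
        induction i using Fin.addCases with
        | left i => simp
        | right i => 
          simp only [Fin.append_right]
          apply hj
          simpa using hi)
    let ℓ : Fin n → Option α := fun i => l.idxFun (eq.symm i)
    have hex : ∃ i : Fin n, ℓ i = none := by
      obtain ⟨i, hi⟩ := l.proper
      exact ⟨eq i, by simpa [ℓ] using hi⟩
    let σ : Fin (n+R) → α ⊕ Fin (m+1) := Fin.append
      (fun i => (ℓ i).elim (Sum.inr 0) Sum.inl)
      (fun i => Sum.elim Sum.inl (fun e => Sum.inr (Fin.succ e)) (σ' i))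
    have hsub : ∀ z : Fin (m+1) → Option α, wSubL σ z =
        Fin.append (fun i => (ℓ i).elim (z 0) some) (wSubL σ' (fun e => z e.succ)) := by
      intro z
      funext i
      induction i using Fin.addCases with
      | left i => 
        simp only [wSubL, σ, Fin.append_left]
        cases ℓ i <;> simp
      | right i => 
        simp only [wSubL, σ, Fin.append_right]
        cases σ' i <;> simp
    refine ⟨σ, ?_, Fin.cons (χ (Fin.append ℓ (fun _ => none))) c', ?_⟩
    · intro e
      induction e using Fin.cases with
      | zero => 
        obtain ⟨i, hi⟩ := hex
        exact ⟨Fin.castAdd R i, by simp [σ, hi]⟩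
      | succ e =>
        obtain ⟨i, hi⟩ := hσ' e
        exact ⟨Fin.natAdd n i, by simp [σ, hi]⟩
    · intro z e hz hze
      rw [hsub]
      induction e using Fin.cases with
      | zero =>
        rw [hz]
        simp only [Fin.cons_zero]
        have : (fun i => (ℓ i).elim none some) = ℓ := by
          funext i; cases ℓ i <;> rfl
        rw [this]
        let j := Fin.find (fun i => ℓ i = none) hex
        have hj : ℓ j = none := Fin.find_spec hex
        apply hχ _ _ (Fin.castAdd R j)
        · simpa using hj
        · simpa using hj
        · intro i hi
          induction i using Fin.addCases with
          | left i =>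
            simp only [Fin.append_left, and_true]
            have hi' : i < j := by
              rw [Fin.lt_def] at hi ⊢
              simpa using hi
            exact Fin.find_min hex hi'
          | right i => 
            exfalso
            have := Fin.lt_def.1 hi
            simp at this
            have := j.2
            omega
      | succ e =>
        obtain ⟨a, ha⟩ := Option.ne_none_iff_exists'.1 (hze 0 (Fin.succ_pos e))
        simp only [Fin.cons_succ]
        rw [← hc' (fun e => z e.succ) e hz (fun i hi => hze i.succ (Fin.succ_lt_succ_iff.2 hi)),
          ← hl a, ha]
        congr 2
        funext i
        simp only [Combinatorics.Line.coe_apply, ℓ]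
        cases l.idxFun (eq.symm i) <;> rfl

theorem gr (α : Type) [Finite α] [Nonempty α] (m : ℕ) :
    ∃ (ι : Type) (_ : Fintype ι), ∀ χ : (ι → Option α) → Prop,
      ∃ σ : ι → α ⊕ Fin m, wProper σ ∧ ∃ c : Prop, ∀ z : Fin m → Option α,
        (∃ e, z e = none) → (χ (wSubL σ z) ↔ c) := by
  obtain ⟨M, hM⟩ := gr2 α Prop (2 * m)
  obtain ⟨ι, hι, h1⟩ := gr1 α M Prop
  refine ⟨ι, hι, fun χ => ?_⟩
  obtain ⟨σ, hσ, hF⟩ := h1 χ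
  obtain ⟨τ, hτ, c, hc⟩ := hM _ hF
  obtain ⟨q, hq⟩ : ∃ q : Prop, m ≤ (univ.filter (fun i => c i = q)).card := by
    by_contra hcon
    push Not at hcon
    have h2 := Finset.card_eq_sum_card_fiberwise (f := c) (s := univ) (t := univ) (fun _ _ => Finset.mem_univ _)
    have h3 : ∑ b : Prop, (univ.filter (fun i => c i = b)).card < ∑ b : Prop, m :=
      Finset.sum_lt_sum_of_nonempty ⟨True, by simp⟩ (fun b _ => hcon b)
    simp at h2 h3
    omega
  obtain ⟨f, hf⟩ : ∃ f : Fin m ↪ Fin (2*m), ∀ i, c (f i) = q := by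
    obtain ⟨T, hT, hTc⟩ := Finset.exists_subset_card_eq hq
    refine ⟨(T.orderEmbOfFin hTc).toEmbedding, fun i => ?_⟩
    have := hT (T.orderEmbOfFin_mem hTc i)
    simpa using this
  have a0 : α := Classical.arbitrary α
  let ρ : Fin (2*m) → α ⊕ Fin m := fun i => if h : ∃ j, f j = i then Sum.inr h.choose else Sum.inl a0
  have hρ : ∀ j, ρ (f j) = Sum.inr j := by
    intro j
    have h : ∃ j', f j' = f j := ⟨j, rfl⟩
    simp only [ρ, dif_pos h]
    exact congrArg _ (f.injective h.choose_spec)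
  refine ⟨wComp σ (wComp τ ρ), wComp_proper hσ (wComp_proper hτ fun e => ⟨f e, hρ e⟩), q, ?_⟩
  intro z hz
  rw [wComp_subL, wComp_subL]
  have hex : ∃ i, wSubL ρ z i = none := by
    obtain ⟨e, he⟩ := hz
    exact ⟨f e, by simp [wSubL, hρ, he]⟩
  let e := Fin.find _ hex
  have he : wSubL ρ z e = none := Fin.find_spec hex
  have := hc (wSubL ρ z) e he (fun i hi => Fin.find_min hex hi)
  rw [this]
  have h : ∃ j, f j = e := by
    by_contra h
    simp [wSubL, ρ, dif_neg h] at he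
  obtain ⟨j, hj⟩ := h
  rw [← hj, hf]

noncomputable def wCnt {X : Type} [Fintype X] (P : X → Prop) : ℝ := ∑ x : X, if P x then (1:ℝ) else 0

theorem wCnt_nonneg {X : Type} [Fintype X] (P : X → Prop) : 0 ≤ wCnt P :=
  Finset.sum_nonneg fun _ _ => by split_ifs <;> norm_num

theorem wCnt_le {X : Type} [Fintype X] (P : X → Prop) : wCnt P ≤ Fintype.card X := by
  unfold wCnt
  calc _ ≤ ∑ x : X, (1:ℝ) := Finset.sum_le_sum fun _ _ => by split_ifs <;> norm_num
    _ = _ := by simp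

theorem wCnt_exists {X : Type} [Fintype X] {P : X → Prop} (h : 0 < wCnt P) : ∃ x, P x := by
  by_contra hcon
  push Not at hcon
  simp [wCnt, hcon] at h

theorem wCnt_pos {X : Type} [Fintype X] {P : X → Prop} (h : ∃ x, P x) : 1 ≤ wCnt P := by
  obtain ⟨x, hx⟩ := h
  unfold wCnt
  calc (1:ℝ) = if P x then (1:ℝ) else 0 := by simp [hx]
    _ ≤ _ := Finset.single_le_sum (f := fun x => if P x then (1:ℝ) else 0)
      (fun i _ => by split_ifs <;> norm_num) (mem_univ x)

def wHas {α ι : Type} (A : (ι → α) → Prop) : Prop :=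
  ∃ z : ι → Option α, (∃ i, z i = none) ∧ ∀ a, A (wLp a z)

def DHJ (α : Type) [Fintype α] : Prop := ∀ δ : ℝ, 0 < δ → ∃ N : ℕ, ∀ (ι : Type) [Fintype ι] [DecidableEq ι],
  N ≤ Fintype.card ι → ∀ A : (ι → α) → Prop, δ * (Fintype.card (ι → α) : ℝ) ≤ wCnt A → wHas A

def wGlue {β ι κ l : Type} (e : ι ≃ κ ⊕ l) (x : κ → β) (y : l → β) : ι → β :=
  fun i => Sum.elim x y (e i)

theorem wGlue_sum {β ι κ l : Type} [Fintype β] [Fintype ι] [Fintype κ] [Fintype l]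
    [DecidableEq ι] [DecidableEq κ] [DecidableEq l]
    (e : ι ≃ κ ⊕ l) (f : (ι → β) → ℝ) :
    ∑ w, f w = ∑ y : l → β, ∑ x : κ → β, f (wGlue e x y) := by
  rw [Finset.sum_comm, ← Fintype.sum_prod_type']
  symm
  apply Fintype.sum_equiv (((Equiv.sumArrowEquivProdArrow κ l β).symm).trans
    (Equiv.arrowCongr e.symm (Equiv.refl β)))
  rintro ⟨x, y⟩
  congr 1

theorem wGlue_card {β ι κ l : Type} [Fintype β] [Fintype ι] [Fintype κ] [Fintype l]
    [DecidableEq ι] [DecidableEq κ] [DecidableEq l]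
    (e : ι ≃ κ ⊕ l) : (Fintype.card (ι → β) : ℝ) =
      (Fintype.card (κ → β) : ℝ) * (Fintype.card (l → β) : ℝ) := by
  have := wGlue_sum (β := β) e (fun _ => (1:ℝ))
  simp only [Finset.sum_const, Finset.card_univ, nsmul_eq_mul, mul_one] at this
  rw [this]; ring

theorem wSplit {ι : Type} [Fintype ι] (a : ℕ) (h : a ≤ Fintype.card ι) :
    Nonempty (ι ≃ Fin a ⊕ Fin (Fintype.card ι - a)) := by
  refine ⟨(Fintype.equivFinOfCardEq ?_).trans finSumFinEquiv.symm⟩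
  omega

theorem avgPig {X Y Z : Type} [Fintype X] [Fintype Y] [Fintype Z] [Nonempty X] [Nonempty Z]
    (P : X → Y → Prop) (Q : Z → Y → Prop) (δ : ℝ)
    (h : δ * (Fintype.card X * Fintype.card Y) ≤ ∑ y, wCnt (fun x => P x y))
    (hQ : ∀ y, δ / 2 * Fintype.card X ≤ wCnt (fun x => P x y) → ∃ z, Q z y) :
    ∃ z, δ / 2 * Fintype.card Y ≤ Fintype.card Z * wCnt (Q z) := by
  by_contra hcon
  push Not at hcon
  have hX : (0:ℝ) < Fintype.card X := by exact_mod_cast Fintype.card_pos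
  have hZ : (0:ℝ) < Fintype.card Z := by exact_mod_cast Fintype.card_pos
  have h1 : ∑ z : Z, (Fintype.card Z : ℝ) * wCnt (Q z) < ∑ z : Z, δ / 2 * Fintype.card Y :=
    Finset.sum_lt_sum_of_nonempty univ_nonempty (fun z _ => hcon z)
  rw [← Finset.mul_sum, Finset.sum_const, Finset.card_univ, nsmul_eq_mul] at h1
  have h1' := lt_of_mul_lt_mul_left h1 hZ.le
  have h2 : ∑ y, wCnt (fun x => P x y) ≤ ∑ y : Y, (δ / 2 * Fintype.card X +
      Fintype.card X * ∑ z, if Q z y then (1:ℝ) else 0) := by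
    apply Finset.sum_le_sum
    intro y _
    have h0 : (0:ℝ) ≤ ∑ z, if Q z y then (1:ℝ) else 0 :=
      Finset.sum_nonneg fun _ _ => by split_ifs <;> norm_num
    by_cases hy : δ / 2 * Fintype.card X ≤ wCnt (fun x => P x y)
    · have h3 : 1 ≤ wCnt (fun z => Q z y) := wCnt_pos (hQ y hy)
      have h4 := wCnt_le (fun x => P x y)
      have h5 : 0 ≤ δ := by
        by_contra hneg
        push Not at hneg
        have := hcon (Classical.arbitrary Z)
        have h6 := wCnt_nonneg (Q (Classical.arbitrary Z))
        have h7 : δ / 2 * (Fintype.card Y : ℝ) ≤ 0 :=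
          mul_nonpos_of_nonpos_of_nonneg (by linarith) (by positivity)
        have : 0 ≤ (Fintype.card Z : ℝ) * wCnt (Q (Classical.arbitrary Z)) := by positivity
        linarith
      have h8 : (Fintype.card X : ℝ) * 1 ≤ Fintype.card X * wCnt (fun z => Q z y) := by gcongr
      have h9 : 0 ≤ δ / 2 * Fintype.card X := by positivity
      unfold wCnt at *
      linarith
    · push Not at hy
      have : 0 ≤ (Fintype.card X : ℝ) * ∑ z, if Q z y then (1:ℝ) else 0 := by positivity
      linarith
  rw [Finset.sum_add_distrib, Finset.sum_const, Finset.card_univ, nsmul_eq_mul, ← Finset.mul_sum,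
    Finset.sum_comm] at h2
  change _ ≤ _ + _ * ∑ z, wCnt (Q z) at h2
  have h3 : (Fintype.card X : ℝ) * ∑ z, wCnt (Q z) < Fintype.card X * (δ / 2 * Fintype.card Y) := by
    gcongr
  nlinarith

theorem mdhj {α : Type} [Fintype α] [Nonempty α] (hα : DHJ α) (d : ℕ) : ∀ δ : ℝ, 0 < δ →
    ∃ N : ℕ, ∀ (ι : Type) [Fintype ι] [DecidableEq ι], N ≤ Fintype.card ι → ∀ A : (ι → α) → Prop,
      δ * (Fintype.card (ι → α) : ℝ) ≤ wCnt A →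
      ∃ σ : ι → α ⊕ Fin d, wProper σ ∧ ∀ x, A (wSub σ x) := by
  induction d with
  | zero =>
    intro δ hδ
    refine ⟨0, fun ι _ _ _ A hA => ?_⟩
    have : (0:ℝ) < Fintype.card (ι → α) := by exact_mod_cast Fintype.card_pos
    obtain ⟨x, hx⟩ := wCnt_exists (lt_of_lt_of_le (by positivity) hA)
    exact ⟨fun i => Sum.inl (x i), fun e => e.elim0, fun _ => hx⟩
  | succ d ih =>
    intro δ hδ
    obtain ⟨N1, h1⟩ := hα (δ / 2) (by positivity)
    have hZ : (0:ℝ) < Fintype.card (Fin N1 → Option α) := by exact_mod_cast Fintype.card_pos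
    obtain ⟨N2, h2⟩ := ih (δ / 2 / Fintype.card (Fin N1 → Option α)) (by positivity)
    refine ⟨N1 + N2, fun ι _ _ hι A hA => ?_⟩
    obtain ⟨e⟩ := wSplit (ι := ι) N1 (by omega)
    obtain ⟨z, hz⟩ := avgPig (fun x y => A (wGlue e x y))
      (fun (z : Fin N1 → Option α) y => (∃ i, z i = none) ∧ ∀ a, A (wGlue e (wLp a z) y)) δ
      (by
        rw [← wGlue_card e]
        unfold wCnt at *
        rw [wGlue_sum e] at hA
        exact hA)
      (by
        intro y hy
        exact h1 (Fin N1) (by simp) _ hy)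
    obtain ⟨τ, hτ, hτA⟩ := h2 (Fin (Fintype.card ι - N1)) (by simp; omega) _ (by
      rw [div_mul_eq_mul_div, div_le_iff₀ hZ, mul_comm (wCnt _)]
      exact hz)
    have a0 : α := Classical.arbitrary α
    obtain ⟨i0, hi0⟩ := (hτA (fun _ => a0)).1
    refine ⟨fun i => Sum.elim (fun j => (z j).elim (Sum.inr 0) Sum.inl)
      (fun j => Sum.elim Sum.inl (fun t => Sum.inr (Fin.succ t)) (τ j)) (e i), ?_, ?_⟩
    · intro t
      induction t using Fin.cases with
      | zero => exact ⟨e.symm (Sum.inl i0), by simp [hi0]⟩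
      | succ t =>
        obtain ⟨j, hj⟩ := hτ t
        exact ⟨e.symm (Sum.inr j), by simp [hj]⟩
    · intro x
      have := (hτA (fun t => x t.succ)).2 (x 0)
      convert this using 1
      funext i
      simp only [wSub, wGlue]
      rcases e i with j | j
      · simp only [Sum.elim_inl, wLp]
        cases z j <;> simp
      · simp only [Sum.elim_inr, wSub]
        cases τ j <;> simp

def wUp {α ι : Type} (a : α) (x : ι → Option α) : ι → Option α := fun i => some (wLp a x i)

def wIns {α ι : Type} (a : α) (D : (ι → Option α) → Prop) : Prop := ∀ x, D x ↔ D (wUp a x)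

theorem tailbd (k : ℕ) (hk : 0 < k) (N' : ℕ) (ε : ℝ) (hε : 0 < ε) : ∃ N : ℕ, ∀ n ≥ N,
    (2:ℝ)^N' * ((k:ℝ) / 2 + 1)^n ≤ ε * ((k:ℝ) + 1)^n := by
  have hk' : (0:ℝ) < k := by exact_mod_cast hk
  have h1 : ((k:ℝ)/2+1)/((k:ℝ)+1) < 1 := by
    rw [div_lt_one (by positivity)]; linarith
  have h0 : 0 ≤ ((k:ℝ)/2+1)/((k:ℝ)+1) := by positivity
  obtain ⟨N, hN⟩ := exists_pow_lt_of_lt_one (show 0 < ε / 2^N' by positivity) h1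
  refine ⟨N, fun n hn => ?_⟩
  have h2 : (((k:ℝ)/2+1)/((k:ℝ)+1))^n ≤ ε / 2^N' :=
    (pow_le_pow_of_le_one h0 h1.le hn).trans hN.le
  rw [div_pow, div_le_div_iff₀ (by positivity) (by positivity)] at h2
  linarith

theorem insDense {α : Type} [Fintype α] [Nonempty α] (hα : DHJ α) (a : α) (d : ℕ) (ε : ℝ)
    (hε : 0 < ε) : ∃ N : ℕ, ∀ (ι : Type) [Fintype ι] [DecidableEq ι], N ≤ Fintype.card ι →
      ∀ D : (ι → Option α) → Prop, wIns a D → ε * (Fintype.card (ι → Option α) : ℝ) ≤ wCnt D →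
      ∃ σ : ι → Option α ⊕ Fin d, wProper σ ∧ ∀ x, D (wSub σ x) := by
  obtain ⟨N', hN'⟩ := mdhj hα d (ε / 3) (by positivity)
  have hk : 0 < Fintype.card α := Fintype.card_pos
  obtain ⟨N, hN⟩ := tailbd (Fintype.card α) hk N' (ε / 3) (by positivity)
  set k := Fintype.card α with hkdef
  refine ⟨N, fun ι _ _ hι D hD hcnt => ?_⟩
  by_contra hcon
  have hcard : (Fintype.card (ι → Option α) : ℝ) = ((k:ℝ) + 1)^(Fintype.card ι) := by
    simp [hkdef]
  let q : (ι → Option α) → Finset ι := fun x => univ.filter (fun i => x i ≠ none)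
  have hfib : ∀ Q : Finset ι, (∑ x with q x = Q, if D x then (1:ℝ) else 0) =
      wCnt (fun y : Q → α => D (fun i => if h : i ∈ Q then some (y ⟨i, h⟩) else none)) := by
    intro Q
    unfold wCnt
    symm
    have a0 : α := Classical.arbitrary α
    apply Finset.sum_bij' (fun (y : Q → α) _ => fun i => if h : i ∈ Q then some (y ⟨i, h⟩) else none)
      (fun x _ => fun i => (x i).getD a0)
    · intro y _
      simp only [mem_filter, mem_univ, true_and, q]
      ext i
      by_cases h : i ∈ Q <;> simp [h]
    · intros; simp
    · intro y _
      funext i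
      simp
    · intro x hx
      simp only [mem_filter, mem_univ, true_and, q] at hx
      funext i
      by_cases h : i ∈ Q
      · simp only [h, dite_true]
        rw [← hx] at h
        simp only [mem_filter, mem_univ, true_and] at h
        obtain ⟨b, hb⟩ := Option.ne_none_iff_exists'.1 h
        simp [hb]
      · simp only [h, dite_false]
        rw [← hx] at h
        simp only [mem_filter, mem_univ, true_and, not_not] at h
        exact h.symm
    · intros; rfl
  have hsum : wCnt D = ∑ Q : Finset ι, ∑ x with q x = Q, if D x then (1:ℝ) else 0 := by
    unfold wCnt
    rw [Finset.sum_fiberwise]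
  have hbd : ∀ Q : Finset ι, (∑ x with q x = Q, if D x then (1:ℝ) else 0) ≤
      ε / 3 * (k:ℝ)^Q.card + 2^N' * ((k:ℝ)/2)^Q.card := by
    intro Q
    rw [hfib]
    have hc : (Fintype.card (Q → α) : ℝ) = (k:ℝ)^Q.card := by simp [hkdef]
    by_cases hQ : N' ≤ Q.card
    · by_contra hlt
      push Not at hlt
      have hpos : (0:ℝ) ≤ 2^N' * ((k:ℝ)/2)^Q.card := by positivity
      obtain ⟨σ, hσ, hσD⟩ := hN' Q (by simpa using hQ)
        (fun y : Q → α => D (fun i => if h : i ∈ Q then some (y ⟨i, h⟩) else none))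
        (by rw [hc]; linarith)
      apply hcon
      refine ⟨fun i => if h : i ∈ Q then Sum.elim (fun b => Sum.inl (some b)) Sum.inr (σ ⟨i, h⟩)
        else Sum.inl none, ?_, ?_⟩
      · intro e
        obtain ⟨i, hi⟩ := hσ e
        exact ⟨i, by simp [hi]⟩
      · intro x
        rw [hD]
        have := hσD (wLp a x)
        rw [hD] at this
        convert this using 1
        funext i
        simp only [wUp, wLp, wSub]
        by_cases h : i ∈ Q
        · simp only [h, dite_true]
          cases σ ⟨i, h⟩ <;> simp [wLp]
        · simp [h]
    · push Not at hQ
      have h1 := wCnt_le (fun y : Q → α => D (fun i => if h : i ∈ Q then some (y ⟨i, h⟩) else none))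
      rw [hc] at h1
      have h2 : (k:ℝ)^Q.card ≤ 2^N' * ((k:ℝ)/2)^Q.card := by
        rw [div_pow, ← mul_div_assoc, le_div_iff₀ (by positivity), mul_comm]
        gcongr
        norm_num
      have : 0 ≤ ε / 3 * (k:ℝ)^Q.card := by positivity
      linarith
  have htot : wCnt D ≤ ε / 3 * ((k:ℝ) + 1)^(Fintype.card ι) +
      2^N' * ((k:ℝ)/2 + 1)^(Fintype.card ι) := by
    rw [hsum]
    refine (Finset.sum_le_sum fun Q _ => hbd Q).trans ?_
    rw [Finset.sum_add_distrib, ← Finset.mul_sum, ← Finset.mul_sum]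
    have hp : ∀ t : ℝ, ∑ Q : Finset ι, t^Q.card = (t+1)^(Fintype.card ι) := by
      intro t
      have := Finset.sum_pow_mul_eq_add_pow t 1 (univ : Finset ι)
      simpa using this
    rw [hp, hp]
  have hN2 := hN _ hι
  rw [hcard] at hcnt
  have : 0 < ((k:ℝ) + 1)^(Fintype.card ι) := by positivity
  nlinarith

def wNeg {β ι : Type} [Fintype β] (d : ℕ) (f : (ι → β) → ℝ) : Prop :=
  ∀ σ : ι → β ⊕ Fin d, wProper σ → ∑ x : Fin d → β, f (wSub σ x) ≤ 0

theorem wSub_inj {β ι κ : Type} {σ : ι → β ⊕ κ} (h : wProper σ) : Function.Injective (wSub σ) := by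
  intro x y hxy
  funext e
  obtain ⟨i, hi⟩ := h e
  have := congrFun hxy i
  simpa [wSub, hi] using this

theorem wNeg_glue1 {β ι κ l : Type} [Fintype β] (e : ι ≃ κ ⊕ l) {d : ℕ} {f : (ι → β) → ℝ}
    (h : wNeg d f) (y : l → β) : wNeg d (fun x => f (wGlue e x y)) := by
  intro σ hσ
  have := h (fun i => Sum.elim σ (fun j => Sum.inl (y j)) (e i)) (by
    intro t
    obtain ⟨i, hi⟩ := hσ t
    exact ⟨e.symm (Sum.inl i), by simp [hi]⟩)
  convert this using 4
  funext i
  simp only [wSub, wGlue]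
  cases e i <;> simp [wSub]

theorem wNeg_glue2 {β ι κ l : Type} [Fintype β] (e : ι ≃ κ ⊕ l) {d : ℕ} {f : (ι → β) → ℝ}
    (h : wNeg d f) (x : κ → β) : wNeg d (fun y => f (wGlue e x y)) := by
  intro σ hσ
  have := h (fun i => Sum.elim (fun j => Sum.inl (x j)) σ (e i)) (by
    intro t
    obtain ⟨i, hi⟩ := hσ t
    exact ⟨e.symm (Sum.inr i), by simp [hi]⟩)
  convert this using 4
  funext i
  simp only [wSub, wGlue]
  cases e i <;> simp [wSub]

theorem wNeg_sub {β ι : Type} [Fintype β] {d d' : ℕ} {f : (ι → β) → ℝ}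
    (h : wNeg d f) (σ : ι → β ⊕ Fin d') (hσ : wProper σ) : wNeg d (fun y => f (wSub σ y)) := by
  intro τ hτ
  have h2 : ∀ x, wSub (wComp σ τ) x = wSub σ (wSub τ x) := by
    intro x
    funext i
    simp only [wSub, wComp]
    cases σ i <;> simp [wSub]
  have := h (wComp σ τ) (wComp_proper hσ hτ)
  simpa only [h2] using this

theorem wUp_up {α ι : Type} (a : α) (x : ι → Option α) : wUp a (wUp a x) = wUp a x := by
  funext i; simp [wUp, wLp]

theorem wUp_glue {α ι κ l : Type} (e : ι ≃ κ ⊕ l) (a : α) (x : κ → Option α) (y : l → Option α) :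
    wUp a (wGlue e x y) = wGlue e (wUp a x) (wUp a y) := by
  funext i
  simp only [wUp, wLp, wGlue]
  cases e i <;> simp [wUp, wLp]

theorem wIns_glue1 {α ι κ l : Type} (e : ι ≃ κ ⊕ l) {a : α} {D : (ι → Option α) → Prop}
    (h : wIns a D) (y : l → Option α) : wIns a (fun x => D (wGlue e x y)) := by
  intro x
  simp only []
  rw [h (wGlue e x y), h (wGlue e (wUp a x) y), wUp_glue, wUp_glue, wUp_up]

theorem wIns_glue2 {α ι κ l : Type} (e : ι ≃ κ ⊕ l) {a : α} {D : (ι → Option α) → Prop}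
    (h : wIns a D) (x : κ → Option α) : wIns a (fun y => D (wGlue e x y)) := by
  intro y
  simp only []
  rw [h (wGlue e x y), h (wGlue e x (wUp a y)), wUp_glue, wUp_glue, wUp_up]

theorem wIns_sub {α ι κ : Type} {a : α} {D : (ι → Option α) → Prop}
    (h : wIns a D) (σ : ι → Option α ⊕ κ) : wIns a (fun y => D (wSub σ y)) := by
  intro y
  simp only []
  rw [h (wSub σ y), h (wSub σ (wUp a y))]
  have : wUp a (wSub σ y) = wUp a (wSub σ (wUp a y)) := by
    funext i
    simp only [wUp, wLp, wSub]
    cases σ i <;> simp [wUp, wLp]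
  rw [this]

theorem p3bU {α ι : Type} [Fintype α] [Fintype ι] [DecidableEq ι] (d : ℕ) (ε : ℝ) (hε : 0 < ε)
    (E : (ι → Option α) → Prop)
    (h : ε * (Fintype.card (ι → Option α) : ℝ) ≤ wCnt E →
      ∃ σ : ι → Option α ⊕ Fin d, wProper σ ∧ ∀ x, E (wSub σ x)) :
    ∃ U : (ι → Option α) → Prop, (∀ x, U x → E x) ∧
      (∀ g, wNeg d g → ∑ x, (if U x then g x else 0) ≤ 0) ∧
      wCnt (fun x => E x ∧ ¬ U x) ≤ (1 - 1 / (Fintype.card (ι → Option α) : ℝ)) * wCnt E +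
        (1 / (Fintype.card (ι → Option α) : ℝ)) * (ε * Fintype.card (ι → Option α)) := by
  have hc : (0:ℝ) < Fintype.card (ι → Option α) := by exact_mod_cast Fintype.card_pos
  by_cases hE : ε * (Fintype.card (ι → Option α) : ℝ) ≤ wCnt E
  · obtain ⟨σ, hσ, hσE⟩ := h hE
    refine ⟨fun x => ∃ y, wSub σ y = x, ?_, ?_, ?_⟩
    · rintro _ ⟨y, rfl⟩; exact hσE y
    · intro g hg
      refine le_trans (le_of_eq ?_) (hg σ hσ)
      refine (@Finset.sum_filter _ _ _ _ _ (fun _ => Classical.propDecidable _) _).symm.trans ?_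
      symm
      apply Finset.sum_bij (fun y _ => wSub σ y)
      · intro y _; simp
      · intro y _ y' _ h; exact wSub_inj hσ h
      · intro x hx
        simp only [mem_filter, mem_univ, true_and] at hx
        obtain ⟨y, hy⟩ := hx
        exact ⟨y, mem_univ _, hy⟩
      · intros; rfl
    · have h1 : wCnt (fun x => E x ∧ ¬ ∃ y, wSub σ y = x) + wCnt (fun x => ∃ y, wSub σ y = x) ≤ wCnt E := by
        unfold wCnt
        rw [← Finset.sum_add_distrib]
        apply Finset.sum_le_sum
        intro x _
        by_cases h1 : ∃ y, wSub σ y = x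
        · obtain ⟨y, rfl⟩ := h1
          simp [hσE y]
        · simp [h1]
      have h2 : 1 ≤ wCnt (fun x => ∃ y, wSub σ y = x) :=
        wCnt_pos ⟨_, fun _ => none, rfl⟩
      have h3 : 1 / (Fintype.card (ι → Option α) : ℝ) * wCnt E ≤ 1 := by
        rw [one_div, inv_mul_le_iff₀ hc, mul_one]
        exact wCnt_le E
      have h4 : 0 ≤ 1 / (Fintype.card (ι → Option α) : ℝ) * (ε * Fintype.card (ι → Option α)) := by
        positivity
      linarith
  · refine ⟨fun _ => False, by simp, by simp, ?_⟩
    push Not at hE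
    have : 1 / (Fintype.card (ι → Option α) : ℝ) * wCnt E ≤
        1 / (Fintype.card (ι → Option α) : ℝ) * (ε * Fintype.card (ι → Option α)) := by
      gcongr
    simp only [not_false_eq_true, and_true]
    linarith

theorem p3b {α : Type} [Fintype α] [Nonempty α] (hα : DHJ α) (a : α) (d : ℕ) (ε : ℝ)
    (hε : 0 < ε) : ∃ N : ℕ, ∃ q : ℝ, 0 ≤ q ∧ q < 1 ∧ ∀ T : ℕ, ∀ (ι : Type) [Fintype ι] [DecidableEq ι],
      N * T ≤ Fintype.card ι → ∀ f : (ι → Option α) → ℝ, (∀ x, f x ≤ 1) → wNeg d f →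
      ∀ D : (ι → Option α) → Prop, wIns a D →
      ∑ x, (if D x then f x else 0) ≤ ε * (1 - q ^ T) * (Fintype.card (ι → Option α)) +
        q ^ T * wCnt D := by
  obtain ⟨N, hN⟩ := insDense hα a d ε hε
  have hc : (1:ℝ) ≤ Fintype.card (Fin N → Option α) := by exact_mod_cast Fintype.card_pos
  set κ := 1 / (Fintype.card (Fin N → Option α) : ℝ) with hκ
  have hκ0 : 0 < κ := by positivity
  have hκ1 : κ ≤ 1 := by rw [hκ, div_le_one (by positivity)]; exact hc
  refine ⟨N, 1 - κ, by linarith, by linarith, fun T => ?_⟩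
  induction T with
  | zero =>
    intro ι _ _ _ f hf _ D _
    simp only [pow_zero, sub_self, mul_zero, zero_mul, zero_add, one_mul]
    unfold wCnt
    apply Finset.sum_le_sum
    intro x _
    split_ifs
    · exact hf x
    · exact le_rfl
  | succ T ih =>
    intro ι _ _ hι f hf hneg D hD
    have hNι : N ≤ Fintype.card ι := by nlinarith
    obtain ⟨R, fR, dR, hR, ⟨e⟩⟩ : ∃ (R : Type) (_ : Fintype R) (_ : DecidableEq R),
        Fintype.card R = Fintype.card ι - N ∧ Nonempty (ι ≃ Fin N ⊕ R) :=
      ⟨Fin (Fintype.card ι - N), inferInstance, inferInstance, by simp, wSplit N hNι⟩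
    have hU : ∀ E : (Fin N → Option α) → Prop, ∃ U : (Fin N → Option α) → Prop, wIns a E →
      (∀ x, U x → E x) ∧
      (∀ g, wNeg d g → ∑ x, (if U x then g x else 0) ≤ 0) ∧
      wCnt (fun x => E x ∧ ¬ U x) ≤ (1 - κ) * wCnt E +
        κ * (ε * Fintype.card (Fin N → Option α)) := by
      intro E
      by_cases hE : wIns a E
      · obtain ⟨U, hU⟩ := p3bU d ε hε E (hN (Fin N) (by simp) E hE)
        exact ⟨U, fun _ => hU⟩
      · exact ⟨fun _ => True, fun h => absurd h hE⟩
    choose U hU using hU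
    have hDy : ∀ y, wIns a (fun x => D (wGlue e x y)) := fun y => wIns_glue1 e hD y
    have hDyy : ∀ y, (fun x => D (wGlue e x y)) = (fun x => D (wGlue e x (wUp a y))) := by
      intro y
      funext x
      exact propext (wIns_glue2 e hD x y)
    have hins : ∀ x, wIns a (fun y => D (wGlue e x y) ∧ ¬ U (fun x => D (wGlue e x y)) x) := by
      intro x y
      simp only []
      rw [← hDyy y]
      have := wIns_glue2 e hD x y
      simp only [] at this
      rw [this]
    have hIH : ∀ x, ∑ y : R → Option α, (if D (wGlue e x y) ∧ ¬ U (fun x => D (wGlue e x y)) x then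
        f (wGlue e x y) else 0) ≤ ε * (1 - (1-κ) ^ T) * (Fintype.card (R → Option α)) +
        (1-κ) ^ T * wCnt (fun y => D (wGlue e x y) ∧ ¬ U (fun x => D (wGlue e x y)) x) := by
      intro x
      have := ih R (by rw [hR]; rw [mul_add] at hι; omega)
        (fun y => f (wGlue e x y)) (fun y => hf _) (wNeg_glue2 e hneg x) _ (hins x)
      convert this
    have h1 : ∑ w, (if D w then f w else 0) ≤ ∑ x, ∑ y : R → Option α,
        (if D (wGlue e x y) ∧ ¬ U (fun x => D (wGlue e x y)) x then f (wGlue e x y) else 0) := by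
      rw [wGlue_sum e, Finset.sum_comm (s := univ (α := Fin N → Option α))]
      apply Finset.sum_le_sum
      intro y _
      have h2 := (hU _ (hDy y)).2.1 _ (wNeg_glue1 e hneg y)
      have h3 : ∑ x, (if D (wGlue e x y) then f (wGlue e x y) else 0) =
        ∑ x, (if U (fun x => D (wGlue e x y)) x then f (wGlue e x y) else 0) + ∑ x,
        (if D (wGlue e x y) ∧ ¬ U (fun x => D (wGlue e x y)) x then f (wGlue e x y) else 0) := by
        rw [← Finset.sum_add_distrib]
        apply Finset.sum_congr rfl
        intro x _
        by_cases hx : U (fun x => D (wGlue e x y)) x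
        · have := (hU _ (hDy y)).1 x hx
          simp [hx, this]
        · simp [hx]
      linarith
    have h2 : ∑ x, wCnt (fun y : R → Option α => D (wGlue e x y) ∧ ¬ U (fun x => D (wGlue e x y)) x) ≤
        (1 - κ) * wCnt D + κ * (ε * Fintype.card (ι → Option α)) := by
      unfold wCnt
      rw [Finset.sum_comm, wGlue_sum e, wGlue_card e, Finset.mul_sum]
      have : κ * (ε * ((Fintype.card (Fin N → Option α) : ℝ) * (Fintype.card (R → Option α) : ℝ))) =
        ∑ y : R → Option α, κ * (ε * (Fintype.card (Fin N → Option α) : ℝ)) := by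
        rw [Finset.sum_const, Finset.card_univ, nsmul_eq_mul]; ring
      rw [this, ← Finset.sum_add_distrib]
      apply Finset.sum_le_sum
      intro y _
      exact (hU _ (hDy y)).2.2
    refine h1.trans ((Finset.sum_le_sum fun x _ => hIH x).trans ?_)
    rw [Finset.sum_add_distrib, Finset.sum_const, Finset.card_univ, nsmul_eq_mul, ← Finset.mul_sum]
    have hp : 0 ≤ (1 - κ)^T := pow_nonneg (by linarith) T
    have h3 := mul_le_mul_of_nonneg_left h2 hp
    rw [wGlue_card e] at h3 ⊢
    rw [pow_succ]
    refine (add_le_add_right h3 _).trans (le_of_eq ?_)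
    ring

theorem p3c {α : Type} [Fintype α] [DecidableEq α] [Nonempty α] (hα : DHJ α) (B : Finset α) : ∀ (d : ℕ) (ε : ℝ), 0 < ε →
    ∃ n0 : ℕ, ∀ (ι : Type) [Fintype ι] [DecidableEq ι], n0 ≤ Fintype.card ι →
      ∀ f : (ι → Option α) → ℝ, (∀ x, f x ≤ 1) → wNeg d f →
      ∀ D : α → (ι → Option α) → Prop, (∀ a ∈ B, wIns a (D a)) →
      ∑ x, (if ∀ a ∈ B, D a x then f x else 0) ≤ ε * (Fintype.card (ι → Option α)) := by
  induction B using Finset.induction_on with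
  | empty =>
    intro d ε hε
    refine ⟨d, fun ι _ _ hι f _ hneg D _ => ?_⟩
    have : ∑ x, (if ∀ a ∈ (∅ : Finset α), D a x then f x else 0) ≤ 0 := by
      obtain ⟨e⟩ := wSplit (ι := ι) d hι
      simp only [notMem_empty, false_implies, implies_true, if_true]
      rw [wGlue_sum e]
      apply Finset.sum_nonpos
      intro y _
      have := wNeg_glue1 e hneg y Sum.inr (fun t => ⟨t, rfl⟩)
      exact this
    exact this.trans (by positivity)
  | insert a B ha ih =>
    intro d ε hε
    obtain ⟨d', hd'⟩ := ih d (ε / 2) (by positivity)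
    obtain ⟨N, q, hq0, hq1, hN⟩ := p3b hα a d' (ε / 4) (by positivity)
    obtain ⟨T, hT⟩ := exists_pow_lt_of_lt_one (show 0 < ε / 4 by positivity) hq1
    refine ⟨N * T, fun ι _ _ hι f hf hneg D hD => ?_⟩
    have hc : (0:ℝ) < Fintype.card (ι → Option α) := by exact_mod_cast Fintype.card_pos
    have key := hN T ι hι (fun x => (if ∀ b ∈ B, D b x then f x else 0) - ε / 2) (by
      intro x
      split_ifs
      · linarith [hf x]
      · linarith) (by
      intro σ hσ
      have := hd' (Fin d') (by simp) (fun y => f (wSub σ y)) (fun y => hf _) (wNeg_sub hneg σ hσ)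
        (fun b y => D b (wSub σ y)) (fun b hb => wIns_sub (hD b (mem_insert_of_mem hb)) σ)
      rw [Finset.sum_sub_distrib, Finset.sum_const, Finset.card_univ, nsmul_eq_mul]
      linarith) (D a) (hD a (mem_insert_self _ _))
    have h1 : ∑ x, (if ∀ b ∈ insert a B, D b x then f x else 0) ≤ ∑ x, ((if D a x then
        ((if ∀ b ∈ B, D b x then f x else 0) - ε / 2) else 0) + ε / 2) := by
      apply Finset.sum_le_sum
      intro x _
      have hiff := Finset.forall_mem_insert a B (fun b => D b x)
      by_cases h1 : D a x
      · by_cases h2 : ∀ b ∈ B, D b x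
        · rw [if_pos (hiff.2 ⟨h1, h2⟩), if_pos h1, if_pos h2]; linarith
        · rw [if_neg (fun h => h2 (hiff.1 h).2), if_pos h1, if_neg h2]; linarith
      · rw [if_neg (fun h => h1 (hiff.1 h).1), if_neg h1]; linarith
    rw [Finset.sum_add_distrib, Finset.sum_const, Finset.card_univ, nsmul_eq_mul] at h1
    have h2 : q ^ T * wCnt (D a) ≤ ε / 4 * Fintype.card (ι → Option α) := by
      have := wCnt_le (D a)
      have := wCnt_nonneg (D a)
      have hqT : 0 ≤ q ^ T := pow_nonneg hq0 T
      gcongr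
    have h3 : ε / 4 * (1 - q ^ T) * (Fintype.card (ι → Option α)) ≤
        ε / 4 * Fintype.card (ι → Option α) := by
      have hqT : 0 ≤ q ^ T := pow_nonneg hq0 T
      gcongr
      nlinarith
    linarith

theorem wCnt_mono {X : Type} [Fintype X] {P Q : X → Prop} (h : ∀ x, P x → Q x) :
    wCnt P ≤ wCnt Q := by
  unfold wCnt
  apply Finset.sum_le_sum
  intro x _
  by_cases hP : P x
  · simp [hP, h x hP]
  · simp only [hP, if_false]; split_ifs <;> norm_num

theorem wCnt_compl {X : Type} [Fintype X] (P : X → Prop) :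
    wCnt P + wCnt (fun x => ¬ P x) = Fintype.card X := by
  unfold wCnt
  rw [← Finset.sum_add_distrib]
  calc _ = ∑ x : X, (1:ℝ) := Finset.sum_congr rfl fun x _ => by by_cases h : P x <;> simp [h]
    _ = _ := by simp

theorem wCnt_comm {X Y : Type} [Fintype X] [Fintype Y] (P : X → Y → Prop) :
    ∑ y, wCnt (fun x => P x y) = ∑ x, wCnt (P x) := by
  unfold wCnt
  exact Finset.sum_comm

theorem limc {β : Type} [Fintype β] [Nonempty β] (h : ¬ DHJ β) : ∃ c : ℝ, 0 < c ∧
    (∀ η : ℝ, 0 < η → ∃ N : ℕ, ∀ (ι : Type) [Fintype ι] [DecidableEq ι], N ≤ Fintype.card ι →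
      ∀ A : (ι → β) → Prop, ¬ wHas A → wCnt A ≤ (c + η) * Fintype.card (ι → β)) ∧
    (∀ η : ℝ, 0 < η → ∀ N : ℕ, ∃ (ι : Type) (_ : Fintype ι) (_ : DecidableEq ι), N ≤ Fintype.card ι ∧
      ∃ A : (ι → β) → Prop, ¬ wHas A ∧ (c - η) * Fintype.card (ι → β) ≤ wCnt A) := by
  unfold DHJ at h
  push Not at h
  obtain ⟨δ0, hδ0, h0⟩ := h
  let S : Set ℝ := {δ | ∀ N : ℕ, ∃ (ι : Type) (_ : Fintype ι) (_ : DecidableEq ι), N ≤ Fintype.card ι ∧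
      ∃ A : (ι → β) → Prop, ¬ wHas A ∧ δ * Fintype.card (ι → β) ≤ wCnt A}
  have hδS : δ0 ∈ S := by
    intro N
    obtain ⟨ι, i1, i2, hι, A, hA, hA2⟩ := h0 N
    exact ⟨ι, i1, i2, hι, A, hA2, hA⟩
  have hbdd : BddAbove S := by
    refine ⟨1, fun δ hδ => ?_⟩
    obtain ⟨ι, i1, i2, hι, A, hA, hA2⟩ := hδ 0
    have hc : (0:ℝ) < Fintype.card (ι → β) := by exact_mod_cast Fintype.card_pos
    have := hA2.trans (wCnt_le A)
    by_contra hcon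
    push Not at hcon
    nlinarith
  refine ⟨sSup S, lt_of_lt_of_le hδ0 (le_csSup hbdd hδS), ?_, ?_⟩
  · intro η hη
    have : sSup S + η ∉ S := fun hmem => by linarith [le_csSup hbdd hmem]
    simp only [S, Set.mem_ofPred_eq, not_forall] at this
    obtain ⟨N, hN⟩ := this
    refine ⟨N, fun ι _ _ hι A hA => ?_⟩
    by_contra hcon
    push Not at hcon
    exact hN ⟨ι, inferInstance, inferInstance, hι, A, hA, hcon.le⟩
  · intro η hη N
    obtain ⟨δ, hδ, hlt⟩ := exists_lt_of_lt_csSup ⟨δ0, hδS⟩ (show sSup S - η < sSup S by linarith)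
    obtain ⟨ι, i1, i2, hι, A, hA, hA2⟩ := hδ N
    refine ⟨ι, i1, i2, hι, A, hA, le_trans ?_ hA2⟩
    gcongr

theorem wHas_sub {β ι κ : Type} {A : (ι → β) → Prop} (σ : ι → β ⊕ κ) (hσ : wProper σ)
    (h : wHas (fun x => A (wSub σ x))) : wHas A := by
  obtain ⟨z, ⟨i, hi⟩, hz⟩ := h
  refine ⟨wSubL σ z, ?_, ?_⟩
  · obtain ⟨j, hj⟩ := hσ i
    exact ⟨j, by simp [wSubL, hj, hi]⟩
  · intro a
    convert hz a using 1
    funext i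
    simp only [wLp, wSubL, wSub]
    cases σ i <;> simp [wLp]

theorem noNone_cnt (α : Type) [Fintype α] (m : ℕ) :
    wCnt (fun z : Fin m → Option α => ¬ ∃ i, z i = none) = (Fintype.card α : ℝ)^m := by
  have h1 : ∀ z : Fin m → Option α, (if ¬ ∃ i, z i = none then (1:ℝ) else 0) =
      ∏ i, if z i = none then (0:ℝ) else 1 := by
    intro z
    by_cases h : ∃ i, z i = none
    · obtain ⟨i, hi⟩ := h
      rw [if_neg (by simpa using ⟨i, hi⟩)]
      exact (Finset.prod_eq_zero (mem_univ i) (by simp [hi])).symm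
    · rw [if_pos h]
      push Not at h
      simp [h]
  unfold wCnt
  have h2 := Finset.prod_univ_sum (fun _ : Fin m => (univ : Finset (Option α)))
    (fun _ b => if b = none then (0:ℝ) else 1)
  rw [Fintype.piFinset_univ] at h2
  calc _ = ∑ z : Fin m → Option α, ∏ i, if z i = none then (0:ℝ) else 1 :=
        Finset.sum_congr rfl fun z _ => by convert h1 z
    _ = _ := by
      rw [← h2]
      simp [Fintype.sum_option]

theorem noNone_small (α : Type) [Fintype α] (ε : ℝ) (hε : 0 < ε) : ∃ m1 : ℕ, ∀ m ≥ m1,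
    wCnt (fun z : Fin m → Option α => ¬ ∃ i, z i = none) ≤
      ε * Fintype.card (Fin m → Option α) := by
  set k : ℝ := ((Fintype.card α : ℕ) : ℝ) with hk
  have hk0 : 0 ≤ k := by positivity
  have h1 : k / (k + 1) < 1 := by rw [div_lt_one (by positivity)]; linarith
  obtain ⟨m1, hm1⟩ := exists_pow_lt_of_lt_one hε h1
  refine ⟨m1, fun m hm => ?_⟩
  rw [noNone_cnt]
  have h2 : (k/(k+1))^m ≤ ε := (pow_le_pow_of_le_one (by positivity) h1.le hm).trans hm1.le
  rw [div_pow, div_le_iff₀ (by positivity)] at h2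
  simpa using h2

theorem keyineq {α : Type} [Fintype α] [Nonempty α] (hα : DHJ α) (c : ℝ) (hc : 0 < c)
    (h1 : ∀ η : ℝ, 0 < η → ∃ N : ℕ, ∀ (ι : Type) [Fintype ι] [DecidableEq ι], N ≤ Fintype.card ι →
      ∀ A : (ι → Option α) → Prop, ¬ wHas A → wCnt A ≤ (c + η) * Fintype.card (ι → Option α))
    (ε : ℝ) (hε : 0 < ε) : ∃ m1 : ℕ, ∀ m ≥ m1, ∀ A : (Fin m → Option α) → Prop, ¬ wHas A →
      wCnt A + c * wCnt (fun z => ∀ a, A (wUp a z)) ≤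
        (c + ε) * Fintype.card (Fin m → Option α) := by
  obtain ⟨d, hd⟩ := h1 (ε / 4) (by positivity)
  set P : ℝ := ((Fintype.card (Finset α) : ℕ) : ℝ) with hP
  have hP0 : 0 < P := by rw [hP]; exact_mod_cast Fintype.card_pos
  obtain ⟨n1, hn1⟩ := p3c hα univ d (ε / 4 / P) (by positivity)
  obtain ⟨n2, hn2⟩ := noNone_small α (ε / 4) (by positivity)
  refine ⟨max n1 n2, fun m hm A hA => ?_⟩
  set M : ℝ := ((Fintype.card (Fin m → Option α) : ℕ) : ℝ) with hM
  have hM0 : 0 < M := by rw [hM]; exact_mod_cast Fintype.card_pos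
  set f : (Fin m → Option α) → ℝ := fun x => (if A x then 1 else 0) - (c + ε / 4) with hf
  have hf1 : ∀ x, f x ≤ 1 := by
    intro x; simp only [hf]; split_ifs <;> linarith
  have hneg : wNeg d f := by
    intro σ hσ
    simp only [hf]
    rw [Finset.sum_sub_distrib, Finset.sum_const, Finset.card_univ, nsmul_eq_mul]
    have := hd (Fin d) (by simp) (fun x => A (wSub σ x)) (fun h => hA (wHas_sub σ hσ h))
    unfold wCnt at this
    linarith
  let Bx : (Fin m → Option α) → Finset α := fun x => univ.filter (fun a => A (wUp a x))
  have hB : ∀ B : Finset α, ∑ x, (if Bx x = B then f x else 0) ≤ ε / 4 / P * M := by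
    intro B
    have := hn1 (Fin m) (by simp; omega) f hf1 hneg (fun a x => A (wUp a x) ↔ a ∈ B) (by
      intro a _ x
      simp only [wUp_up])
    refine le_trans (le_of_eq (Finset.sum_congr rfl fun x _ => ?_)) this
    have hiff : Bx x = B ↔ ∀ a ∈ univ, (A (wUp a x) ↔ a ∈ B) := by
      simp only [Bx, Finset.ext_iff, mem_filter, mem_univ, true_and, forall_const]
    by_cases h : Bx x = B
    · rw [if_pos h, if_pos (hiff.1 h)]
    · rw [if_neg h, if_neg (fun h' => h (hiff.2 h'))]
  have hsum : ∑ x, f x = ∑ B, ∑ x, (if Bx x = B then f x else 0) := by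
    rw [Finset.sum_comm]
    simp
  have hu : ∑ x, (if Bx x = univ then f x else 0) ≤
      wCnt (fun z : Fin m → Option α => ¬ ∃ i, z i = none) - c * wCnt (fun z => ∀ a, A (wUp a z)) := by
    unfold wCnt
    rw [Finset.mul_sum, ← Finset.sum_sub_distrib]
    apply Finset.sum_le_sum
    intro x _
    have hiff : Bx x = univ ↔ ∀ a, A (wUp a x) := by simp [Bx, Finset.eq_univ_iff_forall]
    by_cases h : ∀ a, A (wUp a x)
    · rw [if_pos (hiff.2 h), if_pos h]
      simp only [hf]
      by_cases hAx : A x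
      · have : ¬ ∃ i, x i = none := by
          rintro ⟨i, hi⟩
          apply hA
          refine ⟨fun i => (x i).elim none (fun a => some (some a)), ⟨i, by simp [hi]⟩, ?_⟩
          intro b
          cases b with
          | none =>
            convert hAx using 1
            funext j
            simp only [wLp]
            cases x j <;> simp
          | some a =>
            convert h a using 1
            funext j
            simp only [wLp, wUp]
            cases x j <;> simp
        rw [if_pos hAx, if_pos this]; linarith
      · rw [if_neg hAx]
        split_ifs <;> linarith
    · rw [if_neg (fun h' => h (hiff.1 h')), if_neg h]
      split_ifs <;> norm_num
  have hrest : ∑ B ∈ univ.erase univ, ∑ x, (if Bx x = B then f x else 0) ≤ ε / 4 * M := by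
    calc _ ≤ ∑ B ∈ (univ : Finset (Finset α)).erase univ, ε / 4 / P * M := Finset.sum_le_sum fun B _ => hB B
      _ ≤ ∑ B ∈ (univ : Finset (Finset α)), ε / 4 / P * M :=
        Finset.sum_le_sum_of_subset_of_nonneg (Finset.erase_subset _ _) fun _ _ _ => by positivity
      _ = _ := by
        rw [Finset.sum_const, Finset.card_univ, nsmul_eq_mul, ← hP]; field_simp
  rw [← Finset.add_sum_erase _ _ (mem_univ (univ : Finset α))] at hsum
  have hfs : ∑ x, f x = wCnt A - (c + ε / 4) * M := by
    simp only [hf]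
    rw [Finset.sum_sub_distrib, Finset.sum_const, Finset.card_univ, nsmul_eq_mul, ← hM]
    unfold wCnt
    ring
  have := hn2 m (by omega)
  nlinarith

theorem dhjStep {α : Type} [Fintype α] [Nonempty α] (hα : DHJ α) : DHJ (Option α) := by
  by_contra hcon
  obtain ⟨c, hc, hc1, hc2⟩ := limc hcon
  obtain ⟨m0, hm0⟩ := hα (c / 4) (by positivity)
  set Z : ℝ := ((Fintype.card (Fin m0 → Option α) : ℕ) : ℝ) with hZ
  have hZ0 : 0 < Z := by rw [hZ]; exact_mod_cast Fintype.card_pos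
  set θ : ℝ := c / 4 / Z with hθ
  have hθ0 : 0 < θ := by positivity
  obtain ⟨m1, hm1⟩ := keyineq hα c hc hc1 (c * θ / 8) (by positivity)
  obtain ⟨m2, hm2⟩ := noNone_small α (1/2) (by norm_num)
  obtain ⟨m, hmm0, hmm1, hmm2⟩ : ∃ m, m0 ≤ m ∧ m1 ≤ m ∧ m2 ≤ m :=
    ⟨max m0 (max m1 m2), by omega, by omega, by omega⟩
  obtain ⟨κ, fκ, hκ⟩ := gr α m
  set W : ℝ := ((Fintype.card (κ → Option α) : ℕ) : ℝ) with hW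
  have hW1 : 1 ≤ W := by rw [hW]; exact_mod_cast Fintype.card_pos
  set ε : ℝ := min (c * θ / 8) (c / 2) with hε
  have hε0 : 0 < ε := by rw [hε]; positivity
  have hε1 : ε ≤ c * θ / 8 := min_le_left _ _
  have hε2 : ε ≤ c / 2 := min_le_right _ _
  obtain ⟨N0, hN0⟩ := hc1 (ε / (2 * W)) (by positivity)
  obtain ⟨ι, fι, dι, hι, A, hA, hAc⟩ := hc2 (ε / (2 * W)) (by positivity) (Fintype.card κ + N0)
  obtain ⟨R, fR, dR, hR, ⟨e⟩⟩ : ∃ (R : Type) (_ : Fintype R) (_ : DecidableEq R),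
        N0 ≤ Fintype.card R ∧ Nonempty (ι ≃ κ ⊕ R) := by
    obtain ⟨e⟩ := wSplit (ι := ι) (Fintype.card κ) (by omega)
    refine ⟨Fin (Fintype.card ι - Fintype.card κ), inferInstance, inferInstance, by simp; omega,
      ⟨e.trans (Equiv.sumCongr (Fintype.equivFin κ).symm (Equiv.refl _))⟩⟩
  set Y : ℝ := ((Fintype.card (R → Option α) : ℕ) : ℝ) with hY
  have hY0 : 0 < Y := by rw [hY]; exact_mod_cast Fintype.card_pos
  have hup : ∀ x : κ → Option α, wCnt (fun y => A (wGlue e x y)) ≤ (c + ε / (2 * W)) * Y := by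
    intro x
    apply hN0 R hR
    intro h
    apply hA
    apply wHas_sub (fun i => Sum.elim (fun j => Sum.inl (x j)) Sum.inr (e i))
    · intro t
      exact ⟨e.symm (Sum.inr t), by simp⟩
    · convert h using 3
      funext i
      simp only [wSub, wGlue]
      cases e i <;> simp
  have hlow : ∀ x : κ → Option α, (c - ε) * Y ≤ wCnt (fun y => A (wGlue e x y)) := by
    intro x
    rw [wGlue_card e] at hAc
    unfold wCnt at hAc
    rw [wGlue_sum e, Finset.sum_comm] at hAc
    change _ ≤ ∑ x : κ → Option α, wCnt (fun y => A (wGlue e x y)) at hAc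
    rw [← Finset.add_sum_erase _ _ (mem_univ x), ← hW, ← hY] at hAc
    have h2 : ∑ x ∈ univ.erase x, wCnt (fun y => A (wGlue e x y)) ≤
        (W - 1) * ((c + ε / (2 * W)) * Y) := by
      refine (Finset.sum_le_sum fun x _ => hup x).trans ?_
      rw [Finset.sum_const, nsmul_eq_mul, Finset.card_erase_of_mem (mem_univ _), Finset.card_univ,
        Nat.cast_sub Fintype.card_pos, ← hW, Nat.cast_one]
    have h3 : ε / (2 * W) * W = ε / 2 := by field_simp
    have h4 : 0 < ε / (2 * W) * Y := by positivity
    have h5 : (c - ε / (2 * W)) * (W * Y) = c * W * Y - ε / 2 * Y := by rw [← h3]; ring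
    have h6 : (W - 1) * ((c + ε / (2 * W)) * Y) = c * W * Y + ε / 2 * Y - c * Y - ε / (2 * W) * Y := by
      rw [← h3]; ring
    linarith
  obtain ⟨σ, hσ, cc, hcc⟩ := hκ (fun z => θ * Y ≤ wCnt (fun y => ∀ a, A (wGlue e (wUp a z) y)))
  have hupS : ∀ (a : α) (z : Fin m → Option α), wUp a (wSubL σ z) = wSubL σ (wUp a z) := by
    intro a z
    funext i
    simp only [wUp, wLp, wSubL]
    cases σ i <;> simp [wUp, wLp]
  -- a good line exists
  have hccT : cc := by
    have a0 : α := Classical.arbitrary α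
    let ext : (Fin m0 → Option α) → Fin m → Option α := fun z i =>
      if h : (i : ℕ) < m0 then z ⟨i, h⟩ else some a0
    have hext : ∀ (a : α) (z : Fin m0 → Option α), wUp a (ext z) = ext (fun i => some (wLp a z i)) := by
      intro a z
      funext i
      simp only [wUp, wLp, ext]
      by_cases h : (i : ℕ) < m0 <;> simp [h]
    obtain ⟨z, hz⟩ := avgPig
      (fun (u : Fin m0 → α) (y : R → Option α) => A (wGlue e (wSubL σ (ext (fun i => some (u i)))) y))
      (fun (z : Fin m0 → Option α) y => (∃ i, z i = none) ∧
        ∀ a, A (wGlue e (wSubL σ (ext (fun i => some (wLp a z i)))) y)) (c / 2)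
      (by
        rw [wCnt_comm]
        calc _ = ∑ u : Fin m0 → α, c / 2 * Y := by
              rw [Finset.sum_const, Finset.card_univ, nsmul_eq_mul, hY]; ring
          _ ≤ _ := Finset.sum_le_sum fun u _ => le_trans (by
              gcongr; linarith) (hlow _))
      (by
        intro y hy
        have := hm0 (Fin m0) (by simp) _ (le_trans (le_of_eq (by ring)) hy)
        exact this)
    have hz' : θ * Y ≤ wCnt (fun y => (∃ i, z i = none) ∧
        ∀ a, A (wGlue e (wSubL σ (ext (fun i => some (wLp a z i)))) y)) := by
      rw [hθ, div_mul_eq_mul_div, div_le_iff₀ hZ0]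
      rw [← hY, ← hZ] at hz
      linarith
    obtain ⟨y, ⟨i, hi⟩, _⟩ := wCnt_exists (lt_of_lt_of_le (by positivity) hz')
    rw [← hcc (ext z) ⟨⟨i, by omega⟩, by simp [ext, hi]⟩]
    refine hz'.trans (wCnt_mono ?_)
    intro y hy a
    rw [hupS, hext]
    exact hy.2 a
  set M : ℝ := ((Fintype.card (Fin m → Option α) : ℕ) : ℝ) with hM
  have hM0 : 0 < M := by rw [hM]; exact_mod_cast Fintype.card_pos
  have hk : ∀ y : R → Option α, wCnt (fun x => A (wGlue e (wSubL σ x) y)) +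
      c * wCnt (fun z => ∀ a, A (wGlue e (wSubL σ (wUp a z)) y)) ≤ (c + c * θ / 8) * M := by
    intro y
    apply hm1 m hmm1 (fun x => A (wGlue e (wSubL σ x) y))
    intro h
    apply hA
    apply wHas_sub (fun i => Sum.elim (fun j => Sum.elim (fun b => Sum.inl (some b)) Sum.inr (σ j))
      (fun j => Sum.inl (y j)) (e i))
    · intro t
      obtain ⟨j, hj⟩ := hσ t
      exact ⟨e.symm (Sum.inl j), by simp [hj]⟩
    · convert h using 3
      funext i
      simp only [wSub, wGlue]
      rcases e i with j | j
      · simp only [Sum.elim_inl, wSubL]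
        cases σ j <;> simp
      · simp
  have hks := Finset.sum_le_sum fun y (_ : y ∈ (univ : Finset (R → Option α))) => hk y
  rw [Finset.sum_add_distrib, ← Finset.mul_sum, Finset.sum_const, Finset.card_univ, nsmul_eq_mul,
    ← hY, wCnt_comm (fun x y => A (wGlue e (wSubL σ x) y)),
    wCnt_comm (fun z y => ∀ a, A (wGlue e (wSubL σ (wUp a z)) y))] at hks
  have hs1 : M * ((c - ε) * Y) ≤ ∑ x, wCnt (fun y => A (wGlue e (wSubL σ x) y)) := by
    calc _ = ∑ x : Fin m → Option α, (c - ε) * Y := by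
          rw [Finset.sum_const, Finset.card_univ, nsmul_eq_mul]
      _ ≤ _ := Finset.sum_le_sum fun x _ => hlow _
  have hs2 : M / 2 * (θ * Y) ≤ ∑ z, wCnt (fun y => ∀ a, A (wGlue e (wSubL σ (wUp a z)) y)) := by
    have h1 := wCnt_compl (fun z : Fin m → Option α => ∃ i, z i = none)
    have h2 := hm2 m hmm2
    have h3 : M / 2 ≤ wCnt (fun z : Fin m → Option α => ∃ i, z i = none) := by
      rw [← hM] at h1 h2; linarith
    calc _ ≤ wCnt (fun z : Fin m → Option α => ∃ i, z i = none) * (θ * Y) := by gcongr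
      _ ≤ _ := by
        rw [wCnt, Finset.sum_mul]
        apply Finset.sum_le_sum
        intro z _
        by_cases hz : ∃ i, z i = none
        · have := (hcc z hz).2 hccT
          simp only [hupS] at this
          rw [if_pos hz, one_mul]
          exact this
        · rw [if_neg hz, zero_mul]
          exact wCnt_nonneg _
  have h7 := mul_le_mul_of_nonneg_left hs2 hc.le
  have hMY : 0 < M * Y := by positivity
  have hcθ : 0 < c * θ * (M * Y) := by positivity
  have h8 : ε * (M * Y) ≤ c * θ / 8 * (M * Y) := by gcongr
  nlinarith

theorem dhjEquiv {α β : Type} [Fintype α] [Fintype β] (e : α ≃ β) (h : DHJ α) : DHJ β := by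
  intro δ hδ
  obtain ⟨N, hN⟩ := h δ hδ
  refine ⟨N, fun ι _ _ hι A hA => ?_⟩
  obtain ⟨z, ⟨i, hi⟩, hz⟩ := hN ι hι (fun x => A (fun i => e (x i))) (by
    have h1 : wCnt (fun x : ι → α => A (fun i => e (x i))) = wCnt A := by
      unfold wCnt
      exact Fintype.sum_equiv (Equiv.arrowCongr (Equiv.refl ι) e) _ _ (fun x => rfl)
    rw [h1, Fintype.card_congr (Equiv.arrowCongr (Equiv.refl ι) e)]
    exact hA)
  refine ⟨fun i => (z i).map e, ⟨i, by simp [hi]⟩, fun b => ?_⟩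
  convert hz (e.symm b) using 1
  funext i
  simp only [wLp]
  cases z i <;> simp

theorem dhj (k : ℕ) : DHJ (Fin (k + 1)) := by
  induction k with
  | zero =>
    intro δ hδ
    refine ⟨1, fun ι _ _ hι A hA => ?_⟩
    have : (0:ℝ) < Fintype.card (ι → Fin (0 + 1)) := by exact_mod_cast Fintype.card_pos
    obtain ⟨x, hx⟩ := wCnt_exists (lt_of_lt_of_le (by positivity) hA)
    obtain ⟨i⟩ : Nonempty ι := Fintype.card_pos_iff.1 (by omega)
    refine ⟨fun _ => none, ⟨i, rfl⟩, fun a => ?_⟩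
    convert hx using 1
    funext j
    exact Fin.ext (by omega)
  | succ k ih => exact dhjEquiv (finSuccEquiv (k + 1)).symm (dhjStep ih)

theorem finrank_ker {m k : ℕ} (A : Matrix (Fin m) (Fin k) ℤ)
    (hrank : (A.map (Int.cast : ℤ → ℚ)).rank = m) :
    Module.finrank ℚ (LinearMap.ker (A.map (Int.cast : ℤ → ℚ)).mulVecLin) = k - m := by
  have h := LinearMap.finrank_range_add_finrank_ker (A.map (Int.cast : ℤ → ℚ)).mulVecLin
  rw [Matrix.rank] at hrank
  rw [hrank] at h
  simp at h
  omega

theorem mem_kerQ {m k : ℕ} (A : Matrix (Fin m) (Fin k) ℤ) (x : Fin k → ℤ) :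
    (fun j => (x j : ℚ)) ∈ LinearMap.ker (A.map (Int.cast : ℤ → ℚ)).mulVecLin ↔ A.mulVec x = 0 := by
  rw [LinearMap.mem_ker, Matrix.mulVecLin_apply]
  constructor
  · intro h
    funext i
    have := congrFun h i
    simp only [Matrix.mulVec, dotProduct, Matrix.map_apply, Pi.zero_apply] at this ⊢
    exact_mod_cast this
  · intro h
    funext i
    have := congrFun h i
    simp only [Matrix.mulVec, dotProduct, Matrix.map_apply, Pi.zero_apply] at this ⊢
    exact_mod_cast this

theorem kerVecs {m k : ℕ} (A : Matrix (Fin m) (Fin k) ℤ)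
    (hrank : (A.map (Int.cast : ℤ → ℚ)).rank = m) :
    ∃ v : Fin (k - m) → Fin k → ℤ, (∀ i, A.mulVec (v i) = 0) ∧
      ∀ c : Fin (k - m) → ℤ, (∀ j, ∑ i, c i * v i j = 0) → c = 0 := by
  have b := Module.finBasisOfFinrankEq ℚ _ (finrank_ker A hrank)
  have h : ∀ i, ∃ (D : ℤ) (w : Fin k → ℤ), D ≠ 0 ∧ ∀ j, (w j : ℚ) = D * (b i : Fin k → ℚ) j := by
    intro i
    obtain ⟨D, hD⟩ := IsLocalization.exist_integer_multiples_of_finite (nonZeroDivisors ℤ)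
      (b i : Fin k → ℚ)
    choose w hw using hD
    refine ⟨D, w, nonZeroDivisors.coe_ne_zero D, fun j => ?_⟩
    have := hw j
    simpa using this
  choose D w hD hw using h
  have hwQ : ∀ i, (fun j => (w i j : ℚ)) = (D i : ℚ) • (b i : Fin k → ℚ) := by
    intro i; funext j; simp [hw]
  refine ⟨w, fun i => ?_, fun c hc => ?_⟩
  · rw [← mem_kerQ, hwQ]
    exact Submodule.smul_mem _ _ (b i).2
  · have h1 : ∑ i, ((c i : ℚ) * D i) • b i = 0 := by
      apply Subtype.ext
      funext j
      have := hc j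
      have h2 : ((∑ i, c i * w i j : ℤ) : ℚ) = 0 := by exact_mod_cast this
      push_cast at h2
      simp only [hw] at h2
      simp only [Submodule.coe_sum, Submodule.coe_smul, Finset.sum_apply, Pi.smul_apply, smul_eq_mul,
        Submodule.coe_zero, Pi.zero_apply]
      rw [← h2]
      exact Finset.sum_congr rfl fun i _ => by ring
    have h3 := Fintype.linearIndependent_iff.1 b.linearIndependent _ h1
    funext i
    have := h3 i
    have hDi : (D i : ℚ) ≠ 0 := by exact_mod_cast hD i
    have h4 := (mul_eq_zero.1 this).resolve_right hDi
    exact_mod_cast h4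

theorem subCount {k : ℕ} (n : ℕ) (X : Finset ℤ) (hX : X.card ≤ n) (hn : 1 ≤ n) :
    ∀ (d : ℕ) (U : Submodule ℚ (Fin k → ℚ)), Module.finrank ℚ U ≤ d →
    ∀ S : Finset (Fin k → ℤ), (∀ x ∈ S, ∀ j, x j ∈ X) →
    (∀ x ∈ S, ∀ y ∈ S, (fun j => ((x j - y j : ℤ) : ℚ)) ∈ U) → S.card ≤ n ^ d := by
  intro d
  induction d with
  | zero =>
    intro U hU S hSX hSU
    have hU0 : U = ⊥ := Submodule.finrank_eq_zero.1 (by omega)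
    rw [pow_zero, Finset.card_le_one]
    intro x hx y hy
    have := hSU x hx y hy
    rw [hU0, Submodule.mem_bot] at this
    funext j
    have h2 := congrFun this j
    simp only [Pi.zero_apply, Int.cast_eq_zero] at h2
    omega
  | succ d ih =>
    intro U hU S hSX hSU
    by_cases hU0 : U = ⊥
    · have := ih U (by rw [hU0]; simp) S hSX hSU
      exact this.trans (Nat.pow_le_pow_right hn (by omega))
    obtain ⟨u, huU, hu0⟩ := Submodule.exists_mem_ne_zero_of_ne_bot hU0
    obtain ⟨j, hj⟩ := Function.ne_iff.1 hu0
    let U' := U ⊓ LinearMap.ker (LinearMap.proj j : (Fin k → ℚ) →ₗ[ℚ] ℚ)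
    have hlt : U' < U := by
      refine lt_of_le_of_ne inf_le_left fun h => ?_
      have : u ∈ U' := by rw [h]; exact huU
      exact hj (by simpa using this.2)
    have hfr := Submodule.finrank_lt_finrank_of_lt hlt
    have := Finset.card_le_mul_card_image (f := fun x : Fin k → ℤ => x j) S (n ^ d) (by
      intro a _
      apply ih U' (by omega)
      · intro x hx; exact hSX x (mem_filter.1 hx).1
      · intro x hx y hy
        rw [mem_filter] at hx hy
        refine ⟨hSU x hx.1 y hy.1, ?_⟩
        simp [hx.2, hy.2])
    refine this.trans ?_
    rw [pow_succ]
    gcongr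
    refine le_trans (Finset.card_le_card ?_) hX
    intro a ha
    obtain ⟨x, hx, rfl⟩ := mem_image.1 ha
    exact hSX x hx j

/-- all solutions with entries in `F` -/
noncomputable def wSol {m k : ℕ} (A : Matrix (Fin m) (Fin k) ℤ) (F : Finset ℤ) : Finset (Fin k → ℤ) :=
  (Fintype.piFinset fun _ => F).filter (fun x => A.mulVec x = 0)

theorem mem_wSol {m k : ℕ} {A : Matrix (Fin m) (Fin k) ℤ} {F : Finset ℤ} {x : Fin k → ℤ} :
    x ∈ wSol A F ↔ (∀ j, x j ∈ F) ∧ A.mulVec x = 0 := by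
  simp [wSol]

theorem kerdiff {m k : ℕ} {A : Matrix (Fin m) (Fin k) ℤ} {x y : Fin k → ℤ}
    (hx : A.mulVec x = 0) (hy : A.mulVec y = 0) :
    (fun j => ((x j - y j : ℤ) : ℚ)) ∈ LinearMap.ker (A.map (Int.cast : ℤ → ℚ)).mulVecLin := by
  have := (mem_kerQ A (x - y)).2 (by rw [Matrix.mulVec_sub, hx, hy, sub_zero])
  exact this

theorem noninj {m k : ℕ} (hkm : m < k) (A : Matrix (Fin m) (Fin k) ℤ)
    (hrank : (A.map (Int.cast : ℤ → ℚ)).rank = m)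
    (hirr : ∀ i j : Fin k, i ≠ j → ∃ x : Fin k → ℤ, A.mulVec x = 0 ∧ x i ≠ x j)
    (n : ℕ) (hn : 1 ≤ n) (F : Finset ℤ) (hF : F.card ≤ n) :
    ((wSol A F).filter (fun x => ¬ Function.Injective x)).card ≤ k * k * n ^ (k - m - 1) := by
  have h1 : ∀ p ∈ (univ : Finset (Fin k × Fin k)), ((wSol A F).filter (fun x => p.1 ≠ p.2 ∧ x p.1 = x p.2)).card ≤
      n ^ (k - m - 1) := by
    rintro ⟨i, j⟩ _
    by_cases hij : i = j
    · simp [hij]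
    obtain ⟨x, hx, hxij⟩ := hirr i j hij
    let U := LinearMap.ker (A.map (Int.cast : ℤ → ℚ)).mulVecLin
    let U' := U ⊓ LinearMap.ker ((LinearMap.proj i : (Fin k → ℚ) →ₗ[ℚ] ℚ) - (LinearMap.proj j : (Fin k → ℚ) →ₗ[ℚ] ℚ))
    have hlt : U' < U := by
      refine lt_of_le_of_ne inf_le_left fun h => ?_
      have h2 : (fun j => (x j : ℚ)) ∈ U' := by rw [h]; exact (mem_kerQ A x).2 hx
      have h3 := h2.2
      simp only [SetLike.mem_coe, LinearMap.mem_ker, LinearMap.sub_apply, LinearMap.proj_apply] at h3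
      apply hxij
      have : (x i : ℚ) = x j := by linarith
      exact_mod_cast this
    have hfr := Submodule.finrank_lt_finrank_of_lt hlt
    rw [finrank_ker A hrank] at hfr
    apply subCount n F hF hn _ U' (by omega)
    · intro x hx
      exact (mem_wSol.1 (mem_filter.1 hx).1).1
    · intro x hx y hy
      rw [mem_filter, mem_wSol] at hx hy
      refine ⟨kerdiff hx.1.2 hy.1.2, ?_⟩
      have h1 := hx.2.2
      have h2 := hy.2.2
      simp only [] at h1 h2
      simp [h1, h2]
  calc _ ≤ ((univ : Finset (Fin k × Fin k)).biUnion (fun p => (wSol A F).filter (fun x => p.1 ≠ p.2 ∧ x p.1 = x p.2))).card := by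
        apply Finset.card_le_card
        intro x hx
        rw [mem_filter] at hx
        obtain ⟨hx1, hx2⟩ := hx
        simp only [Function.Injective, not_forall] at hx2
        obtain ⟨i, j, h, hij⟩ := hx2
        simp only [mem_biUnion, mem_filter, mem_univ, true_and]
        exact ⟨(i, j), hx1, hij, h⟩
    _ ≤ (univ : Finset (Fin k × Fin k)).card * n ^ (k - m - 1) := Finset.card_biUnion_le_card_mul _ _ _ h1
    _ = _ := by simp

/-- degree bound: solutions with prescribed values on `B`. -/
theorem degB {m k : ℕ} (A : Matrix (Fin m) (Fin k) ℤ) (B : Finset (Fin k)) (b : Fin k → ℤ)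
    (n : ℕ) (hn : 1 ≤ n) (F : Finset ℤ) (hF : F.card ≤ n) :
    ((wSol A F).filter (fun x => ∀ j ∈ B, x j = b j)).card ≤ n ^ (k - B.card -
      ((A.map (Int.cast : ℤ → ℚ)).submatrix id (fun j : {j : Fin k // j ∉ B} => (j : Fin k))).rank) := by
  set A' := (A.map (Int.cast : ℤ → ℚ)).submatrix id (fun j : {j : Fin k // j ∉ B} => (j : Fin k)) with hA'
  let W : Submodule ℚ (Fin k → ℚ) :=
    { carrier := {u | ∀ j ∈ B, u j = 0}
      add_mem' := by intro a b ha hb j hj; simp [ha j hj, hb j hj]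
      zero_mem' := by intro j _; rfl
      smul_mem' := by intro c a ha j hj; simp [ha j hj] }
  let U := LinearMap.ker (A.map (Int.cast : ℤ → ℚ)).mulVecLin ⊓ W
  have hmem : ∀ u : U, (fun j : {j : Fin k // j ∉ B} => u.1 j) ∈ LinearMap.ker A'.mulVecLin := by
    rintro ⟨u, hu1, hu2⟩
    rw [LinearMap.mem_ker, Matrix.mulVecLin_apply]
    rw [SetLike.mem_coe, LinearMap.mem_ker, Matrix.mulVecLin_apply] at hu1
    funext i
    have := congrFun hu1 i
    simp only [Matrix.mulVec, dotProduct, Pi.zero_apply, hA', Matrix.submatrix_apply, id] at this ⊢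
    have h5 := Finset.sum_subtype (univ.filter (fun j => j ∉ B)) (p := fun j => j ∉ B) (F := inferInstance) (by simp)
      (fun j => (A.map (Int.cast : ℤ → ℚ)) i j * u j)
    rw [← h5, Finset.sum_filter_of_ne, this]
    intro j _ hj hjB
    exact hj (by rw [hu2 j hjB, mul_zero])
  let f : U →ₗ[ℚ] LinearMap.ker A'.mulVecLin :=
    { toFun := fun u => ⟨fun j => u.1 j, hmem u⟩
      map_add' := by intros; rfl
      map_smul' := by intros; rfl }
  have hinj : Function.Injective f := by
    intro u v huv
    apply Subtype.ext
    funext j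
    by_cases hj : j ∈ B
    · rw [u.2.2 j hj, v.2.2 j hj]
    · exact congrFun (congrArg Subtype.val huv) ⟨j, hj⟩
  have h1 := LinearMap.finrank_le_finrank_of_injective hinj
  have h2 := LinearMap.finrank_range_add_finrank_ker A'.mulVecLin
  have h3 : Module.finrank ℚ ({j : Fin k // j ∉ B} → ℚ) = k - B.card := by
    rw [Module.finrank_fintype_fun_eq_card, Fintype.card_subtype_compl]
    simp
  rw [h3] at h2
  have h4 : A'.rank = Module.finrank ℚ (LinearMap.range A'.mulVecLin) := rfl
  apply subCount n F hF hn _ U (by omega)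
  · intro x hx
    exact (mem_wSol.1 (mem_filter.1 hx).1).1
  · intro x hx y hy
    rw [mem_filter, mem_wSol] at hx hy
    refine ⟨kerdiff hx.1.2 hy.1.2, ?_⟩
    intro j hj
    simp [hx.2 j hj, hy.2 j hj]

noncomputable def wX {N r k L : ℕ} (v : Fin r → Fin k → ℤ) (e : Fin N → Fin r → Fin L) (w : Fin N → Fin k) : ℤ :=
  ∑ s, ∑ i, ((e s i : ℕ) : ℤ) * v i (w s)

theorem wX_bd {N r k L : ℕ} (v : Fin r → Fin k → ℤ) (V : ℕ) (hV : ∀ i j, |v i j| ≤ V)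
    (e : Fin N → Fin r → Fin L) (w : Fin N → Fin k) : |wX v e w| ≤ (L * (N * r * V) : ℕ) := by
  unfold wX
  calc _ ≤ ∑ s : Fin N, ∑ i : Fin r, ((L * V : ℕ) : ℤ) := by
        refine (Finset.abs_sum_le_sum_abs _ _).trans (Finset.sum_le_sum fun s _ => ?_)
        refine (Finset.abs_sum_le_sum_abs _ _).trans (Finset.sum_le_sum fun i _ => ?_)
        rw [abs_mul]
        push_cast
        have h1 : |((e s i : ℕ) : ℤ)| ≤ L := by
          rw [abs_of_nonneg (by positivity)]
          exact_mod_cast (e s i).2.le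
        exact mul_le_mul h1 (hV _ _) (abs_nonneg _) (by positivity)
    _ = _ := by
      simp only [Finset.sum_const, Finset.card_univ, Fintype.card_fin, nsmul_eq_mul]
      push_cast; ring

theorem goodcount {k : ℕ} [NeZero k] (N n : ℕ) (hn : 1 ≤ n) (δ : ℝ) (hδ : 0 < δ)
    (hN : ∀ A : (Fin N → Fin k) → Prop, δ / 8 * (Fintype.card (Fin N → Fin k) : ℝ) ≤ wCnt A → wHas A)
    (F : Finset ℤ) (hF : F ⊆ Icc 1 (n:ℤ)) (hFc : δ * n ≤ F.card) (X : (Fin N → Fin k) → ℤ)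
    (hX : ∀ w, |X w| ≤ n) :
    δ / 2 * n ≤ (((Icc (-(n:ℤ)) (2 * n)).filter (fun a => wHas (fun w => a + X w ∈ F))).card : ℝ) := by
  set W : ℝ := ((Fintype.card (Fin N → Fin k) : ℕ) : ℝ) with hW
  have hW0 : 0 < W := by rw [hW]; exact_mod_cast Fintype.card_pos
  have h1 : ∀ w, (∑ a ∈ Icc (-(n:ℤ)) (2 * n), if a + X w ∈ F then (1:ℝ) else 0) = F.card := by
    intro w
    rw [← Finset.sum_filter, Finset.sum_const, nsmul_eq_mul, mul_one]
    norm_cast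
    apply Finset.card_bij (fun a _ => a + X w)
    · intro a ha; exact (mem_filter.1 ha).2
    · intro a _ b _ h; simpa using h
    · intro f hf
      have h2 := mem_Icc.1 (hF hf)
      have h3 := abs_le.1 (hX w)
      exact ⟨f - X w, by simp only [mem_filter, mem_Icc, sub_add_cancel]; exact ⟨⟨by omega, by omega⟩, hf⟩, by ring⟩
  have h2 : ∑ a ∈ Icc (-(n:ℤ)) (2 * n), wCnt (fun w => a + X w ∈ F) = W * F.card := by
    unfold wCnt
    rw [Finset.sum_comm]
    rw [Finset.sum_congr rfl (g := fun _ => (F.card : ℝ)) fun w _ => by convert h1 w]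
    rw [Finset.sum_const, Finset.card_univ, nsmul_eq_mul]
  have h3 : ∑ a ∈ Icc (-(n:ℤ)) (2 * n), wCnt (fun w => a + X w ∈ F) ≤
      ∑ a ∈ Icc (-(n:ℤ)) (2 * n), (δ / 8 * W + W * if wHas (fun w => a + X w ∈ F) then (1:ℝ) else 0) := by
    apply Finset.sum_le_sum
    intro a _
    have h5 := wCnt_le (fun w => a + X w ∈ F)
    rw [← hW] at h5
    by_cases h : wHas (fun w => a + X w ∈ F)
    · rw [if_pos h]
      have : 0 ≤ δ / 8 * W := by positivity
      linarith
    · rw [if_neg h]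
      by_contra hcon
      push Not at hcon
      exact h (hN _ (by linarith))
  rw [h2, Finset.sum_add_distrib, Finset.sum_const, ← Finset.mul_sum, ← Finset.sum_filter, Finset.sum_const,
    nsmul_eq_mul, nsmul_eq_mul, mul_one] at h3
  have h4 : ((Icc (-(n:ℤ)) (2 * n)).card : ℝ) ≤ 4 * n := by
    rw [Int.card_Icc]
    have : (2 * (n:ℤ) + 1 - -(n:ℤ)).toNat = 3 * n + 1 := by omega
    rw [this]
    push_cast
    have : (1:ℝ) ≤ n := by exact_mod_cast hn
    linarith
  have h6 : ((Icc (-(n:ℤ)) (2 * n)).card : ℝ) * (δ / 8 * W) ≤ 4 * n * (δ / 8 * W) := by gcongr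
  have h7 : W * (δ * n) ≤ W * F.card := by gcongr
  have h8 : W * (δ / 2 * n) ≤ W * (((Icc (-(n:ℤ)) (2 * n)).filter (fun a => wHas (fun w => a + X w ∈ F))).card : ℝ) := by
    linarith
  exact le_of_mul_le_mul_left h8 hW0

theorem solLow1 {m k : ℕ} (A : Matrix (Fin m) (Fin k) ℤ) (hscc : ∀ r : Fin m, ∑ j, A r j = 0)
    {N r L : ℕ} (v : Fin r → Fin k → ℤ) (hv : ∀ i, A.mulVec (v i) = 0)
    (a : ℤ) (e : Fin N → Fin r → Fin L) (z : Fin N → Option (Fin k)) :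
    A.mulVec (fun j => a + wX v e (wLp j z)) = 0 := by
  have hconst : ∀ c : ℤ, (fun _ => c) ∈ LinearMap.ker A.mulVecLin := by
    intro c
    rw [LinearMap.mem_ker, Matrix.mulVecLin_apply]
    funext i
    simp only [Matrix.mulVec, dotProduct, Pi.zero_apply]
    rw [← Finset.sum_mul, hscc, zero_mul]
  have hv' : ∀ i, v i ∈ LinearMap.ker A.mulVecLin := fun i => by
    rw [LinearMap.mem_ker, Matrix.mulVecLin_apply]; exact hv i
  have : (fun j => a + wX v e (wLp j z)) ∈ LinearMap.ker A.mulVecLin := by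
    have heq : (fun j => a + wX v e (wLp j z)) = (fun _ => a) + ∑ s, (fun j => ∑ i, ((e s i : ℕ) : ℤ) * v i (wLp j z s)) := by
      funext j
      simp [wX]
    rw [heq]
    apply Submodule.add_mem _ (hconst a)
    apply Submodule.sum_mem
    intro s _
    cases hz : z s with
    | none =>
      have : (fun j => ∑ i, ((e s i : ℕ) : ℤ) * v i (wLp j z s)) = ∑ i, ((e s i : ℕ) : ℤ) • v i := by
        funext j
        simp [wLp, hz]
      rw [this]
      exact Submodule.sum_mem _ fun i _ => Submodule.smul_mem _ _ (hv' i)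
    | some b =>
      have : (fun j => ∑ i, ((e s i : ℕ) : ℤ) * v i (wLp j z s)) = fun _ => ∑ i, ((e s i : ℕ) : ℤ) * v i b := by
        funext j
        simp [wLp, hz]
      rw [this]
      exact hconst _
  rw [LinearMap.mem_ker, Matrix.mulVecLin_apply] at this
  exact this

theorem solLow {m k : ℕ} (hkm : m < k) (A : Matrix (Fin m) (Fin k) ℤ)
    (hrank : (A.map (Int.cast : ℤ → ℚ)).rank = m) (hscc : ∀ r : Fin m, ∑ j, A r j = 0)
    (δ : ℝ) (hδ : 0 < δ) : ∃ c : ℝ, 0 < c ∧ ∃ n0 : ℕ, ∀ n : ℕ, n0 ≤ n → ∀ F : Finset ℤ,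
      F ⊆ Icc 1 (n:ℤ) → δ * n ≤ F.card → c * (n:ℝ) ^ (k - m) ≤ ((wSol A F).card : ℝ) := by
  have hkv := kerVecs A hrank
  generalize k - m = r at hkv ⊢
  obtain ⟨v, hv, hvl⟩ := hkv
  have hk : NeZero k := ⟨by omega⟩
  obtain ⟨N, hN⟩ : ∃ N : ℕ, ∀ A : (Fin (N + 1) → Fin k) → Prop,
      δ / 8 * (Fintype.card (Fin (N + 1) → Fin k) : ℝ) ≤ wCnt A → wHas A := by
    obtain ⟨k', rfl⟩ : ∃ k', k = k' + 1 := ⟨k - 1, by omega⟩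
    obtain ⟨N, hN⟩ := dhj k' (δ / 8) (by positivity)
    exact ⟨N, fun A hA => hN (Fin (N + 1)) (by simp) A hA⟩
  obtain ⟨V, hV⟩ : ∃ V : ℕ, ∀ i j, |v i j| ≤ V := by
    refine ⟨∑ i, ∑ j, (v i j).natAbs, fun i j => ?_⟩
    rw [Int.abs_eq_natAbs]
    norm_cast
    exact (Finset.single_le_sum (f := fun j => (v i j).natAbs) (fun _ _ => Nat.zero_le _) (mem_univ j)).trans
      (Finset.single_le_sum (f := fun i => ∑ j, (v i j).natAbs) (fun _ _ => Nat.zero_le _) (mem_univ i))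
  set Q := (N + 1) * r * V + 1 with hQ
  set K : ℝ := ((Fintype.card (Fin (N + 1) → Option (Fin k)) : ℕ) : ℝ) with hK
  have hK0 : 0 < K := by rw [hK]; exact_mod_cast Fintype.card_pos
  refine ⟨δ / (8 * K) * (1 / (2 * Q)) ^ r, by positivity, 2 * Q, fun n hn F hF hFc => ?_⟩
  set L := n / Q with hL
  have hQ1 : 1 ≤ Q := by omega
  have hn1 : 1 ≤ n := by omega
  have hL1 : L * Q ≤ n := Nat.div_mul_le_self n Q
  have hX : ∀ (e : Fin (N + 1) → Fin r → Fin L) w, |wX v e w| ≤ n := by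
    intro e w
    refine (wX_bd v V hV e w).trans ?_
    norm_cast
    refine le_trans (Nat.mul_le_mul_left L ?_) hL1
    omega
  set G : Finset (ℤ × (Fin (N + 1) → Fin r → Fin L)) :=
    ((Icc (-(n:ℤ)) (2 * n)) ×ˢ univ).filter (fun p => wHas (fun w => p.1 + wX v p.2 w ∈ F)) with hG
  have hGlow : (L:ℝ) ^ (r * (N + 1)) * (δ / 2 * n) ≤ G.card := by
    have h1 : (G.card : ℝ) = ∑ e : Fin (N + 1) → Fin r → Fin L,
        (((Icc (-(n:ℤ)) (2 * n)).filter (fun a => wHas (fun w => a + wX v e w ∈ F))).card : ℝ) := by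
      rw [hG, Finset.card_filter, Finset.sum_product_right]
      push_cast
      apply Finset.sum_congr rfl
      intro e _
      rw [Finset.card_filter]
      push_cast
      rfl
    rw [h1]
    calc _ = ∑ e : Fin (N + 1) → Fin r → Fin L, δ / 2 * n := by
          rw [Finset.sum_const, Finset.card_univ, nsmul_eq_mul]
          simp only [Fintype.card_fun, Fintype.card_fin]
          push_cast
          rw [← pow_mul]
      _ ≤ _ := Finset.sum_le_sum fun e _ => goodcount (N + 1) n hn1 δ hδ hN F hF hFc _ (hX e)
  have hz : ∀ p : ℤ × (Fin (N + 1) → Fin r → Fin L), ∃ z : Fin (N + 1) → Option (Fin k), p ∈ G →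
      (∃ i, z i = none) ∧ ∀ j, p.1 + wX v p.2 (wLp j z) ∈ F := by
    intro p
    by_cases hp : p ∈ G
    · obtain ⟨z, hz⟩ := (mem_filter.1 hp).2
      exact ⟨z, fun _ => hz⟩
    · exact ⟨fun _ => none, fun h => absurd h hp⟩
  choose z hz using hz
  have hGup : G.card ≤ ((3 * n + 1) * L ^ (r * N)) * (G.image (fun p => (z p, fun j => p.1 + wX v p.2 (wLp j (z p))))).card := by
    apply Finset.card_le_mul_card_image
    rintro ⟨ζ, x⟩ hζ
    obtain ⟨p0, hp0, hp0'⟩ := mem_image.1 hζ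
    obtain ⟨⟨s0, hs0⟩, _⟩ := hz p0 hp0
    have hzp0 : z p0 = ζ := congrArg Prod.fst hp0'
    rw [hzp0] at hs0
    have hcard : ((Icc (-(n:ℤ)) (2 * n)) ×ˢ (univ : Finset (Fin N → Fin r → Fin L))).card =
        (3 * n + 1) * L ^ (r * N) := by
      rw [Finset.card_product, Int.card_Icc, Finset.card_univ]
      have : (2 * (n:ℤ) + 1 - -(n:ℤ)).toNat = 3 * n + 1 := by omega
      rw [this]
      simp only [Fintype.card_fun, Fintype.card_fin]
      rw [← pow_mul]
    rw [← hcard]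
    apply Finset.card_le_card_of_injOn (fun p => (p.1, fun t => p.2 (s0.succAbove t)))
    · intro p hp
      have := (mem_filter.1 (mem_filter.1 hp).1).1
      rw [mem_product] at this
      exact mem_product.2 ⟨this.1, mem_univ _⟩
    · rintro ⟨a, e⟩ hp ⟨a', e'⟩ hp' heq
      have h1 := (mem_filter.1 hp).2
      have h2 := (mem_filter.1 hp').2
      simp only [Prod.mk.injEq] at h1 h2 heq
      obtain ⟨ha, he⟩ := heq
      subst ha
      have hx : ∀ j, wX v e (wLp j ζ) = wX v e' (wLp j ζ) := by
        intro j
        have h3 := congrFun h1.2 j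
        have h4 := congrFun h2.2 j
        rw [h1.1] at h3
        rw [h2.1] at h4
        linarith
      have hes : ∀ t, e (s0.succAbove t) = e' (s0.succAbove t) := fun t => congrFun he t
      have he0 : e s0 = e' s0 := by
        have := hvl (fun i => ((e s0 i : ℕ) : ℤ) - ((e' s0 i : ℕ) : ℤ)) (by
          intro j
          have h3 := hx j
          unfold wX at h3
          rw [Fin.sum_univ_succAbove _ s0, Fin.sum_univ_succAbove _ s0] at h3
          simp only [hes] at h3
          have h4 := add_right_cancel h3
          simp only [wLp, hs0, Option.getD_none] at h4
          simp only [sub_mul, Finset.sum_sub_distrib, h4, sub_self])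
        funext i
        have h3 := congrFun this i
        simp only [Pi.zero_apply] at h3
        apply Fin.ext
        omega
      congr 1
      funext s
      rcases Fin.eq_self_or_eq_succAbove s0 s with h | ⟨t, h⟩
      · rw [h, he0]
      · rw [h, hes t]
  have himg : (G.image (fun p => (z p, fun j => p.1 + wX v p.2 (wLp j (z p))))).card ≤
      Fintype.card (Fin (N + 1) → Option (Fin k)) * (wSol A F).card := by
    rw [← Finset.card_univ, ← Finset.card_product]
    apply Finset.card_le_card
    intro q hq
    obtain ⟨p, hp, rfl⟩ := mem_image.1 hq
    refine mem_product.2 ⟨mem_univ _, mem_wSol.2 ⟨(hz p hp).2, solLow1 A hscc v hv _ _ _⟩⟩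
  have hfin : (G.card : ℝ) ≤ (4 * n * L ^ (r * N)) * (K * (wSol A F).card) := by
    have h1 : (G.card : ℝ) ≤ ((3 * n + 1) * L ^ (r * N)) * (K * (wSol A F).card) := by
      rw [hK]
      exact_mod_cast hGup.trans (Nat.mul_le_mul_left _ himg)
    refine h1.trans ?_
    have : (1:ℝ) ≤ n := by exact_mod_cast hn1
    gcongr
    linarith
  have hL1' : 1 ≤ L := by
    rw [hL, Nat.one_le_div_iff (by omega)]; omega
  have hLR : (n:ℝ) * (1 / (2 * Q)) ≤ L := by
    have h1 : n < (L + 1) * Q := Nat.lt_mul_of_div_lt (by omega) hQ1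
    have h2 : n ≤ L * (2 * Q) := by nlinarith
    rw [mul_one_div, div_le_iff₀ (by positivity)]
    exact_mod_cast h2
  have hpow : ((n:ℝ) * (1 / (2 * Q))) ^ r ≤ (L:ℝ) ^ r := by gcongr
  have hn0 : (0:ℝ) < n := by exact_mod_cast hn1
  have hL0 : (0:ℝ) < L := by exact_mod_cast hL1'
  have h9 := hGlow.trans hfin
  rw [mul_add, mul_one, pow_add] at h9
  have h10 : (n * L ^ (r * N)) * (L ^ r * (δ / 2)) ≤ ((n:ℝ) * L ^ (r * N)) * (4 * (K * (wSol A F).card)) := by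
    linarith
  have h11 := le_of_mul_le_mul_left h10 (by positivity)
  calc _ = δ / (8 * K) * ((n:ℝ) * (1 / (2 * Q))) ^ r := by rw [mul_pow]; ring
    _ ≤ δ / (8 * K) * (L:ℝ) ^ r := by gcongr
    _ ≤ _ := by
      rw [div_mul_eq_mul_div, div_le_iff₀ (by positivity)]
      linarith

theorem supersat {m k : ℕ} (hkm : m < k) (A : Matrix (Fin m) (Fin k) ℤ)
    (hrank : (A.map (Int.cast : ℤ → ℚ)).rank = m)
    (hirr : ∀ i j : Fin k, i ≠ j → ∃ x : Fin k → ℤ, A.mulVec x = 0 ∧ x i ≠ x j)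
    (hscc : ∀ r : Fin m, ∑ j, A r j = 0)
    (δ : ℝ) (hδ : 0 < δ) : ∃ c : ℝ, 0 < c ∧ ∃ n0 : ℕ, ∀ n : ℕ, n0 ≤ n → ∀ F : Finset ℤ,
      F ⊆ Icc 1 (n:ℤ) → δ * n ≤ F.card →
      c * (n:ℝ) ^ (k - m) ≤ (((wSol A F).filter (fun x => Function.Injective x)).card : ℝ) := by
  obtain ⟨c, hc, n0, h⟩ := solLow hkm A hrank hscc δ hδ
  refine ⟨c / 2, by positivity, max (n0 + 1) (⌈2 * (k * k : ℝ) / c⌉₊), fun n hn F hF hFc => ?_⟩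
  have h1 := h n (by omega) F hF hFc
  have hFn : F.card ≤ n := by
    have := Finset.card_le_card hF
    simpa using this
  have h2 := noninj hkm A hrank hirr n (by omega) F hFn
  have h3 := Finset.card_filter_add_card_filter_not (s := wSol A F) (fun x => Function.Injective x)
  have h4 : ((k * k * n ^ (k - m - 1) : ℕ) : ℝ) ≤ c / 2 * (n:ℝ) ^ (k - m) := by
    have h5 : k - m = (k - m - 1) + 1 := by omega
    have h6 : 2 * (k * k : ℝ) / c ≤ n := (Nat.le_ceil _).trans (Nat.cast_le.2 ((le_max_right _ _).trans hn))
    rw [div_le_iff₀ hc] at h6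
    have h7 : (n:ℝ) ^ (k - m) = n ^ (k - m - 1) * n := by
      conv_lhs => rw [h5]
      rw [pow_succ]
    rw [h7]
    push_cast
    have h8 : (0:ℝ) ≤ n ^ (k - m - 1) := by positivity
    nlinarith
  have h2' : (((wSol A F).filter (fun x => ¬ Function.Injective x)).card : ℝ) ≤ c / 2 * (n:ℝ) ^ (k - m) :=
    le_trans (by exact_mod_cast h2) h4
  have h3' : (((wSol A F).filter (fun x => Function.Injective x)).card : ℝ) +
    (((wSol A F).filter (fun x => ¬ Function.Injective x)).card : ℝ) = (wSol A F).card := by exact_mod_cast h3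
  linarith

noncomputable def wDeg (G : Finset ℤ) (w : Finset ℤ → ℝ) (S : Finset ℤ) : ℝ :=
  ∑ E ∈ G.powerset, if S ⊆ E then w E else 0
noncomputable def wE (G : Finset ℤ) (w : Finset ℤ → ℝ) : ℝ := ∑ E ∈ G.powerset, w E
noncomputable def lk (g : Finset ℤ → ℝ) (v : ℤ) (X : Finset ℤ) : ℝ := if v ∈ X then 0 else g (insert v X)
def wInd (G : Finset ℤ) (w : Finset ℤ → ℝ) (I : Finset ℤ) : Prop := ∀ E ∈ G.powerset, E ⊆ I → w E = 0

theorem wDeg_empty (G : Finset ℤ) (w : Finset ℤ → ℝ) : wDeg G w ∅ = wE G w := by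
  simp [wDeg, wE]

theorem wDeg_mono {G : Finset ℤ} {g w : Finset ℤ → ℝ} (h : ∀ E, g E ≤ w E) (S : Finset ℤ) :
    wDeg G g S ≤ wDeg G w S :=
  Finset.sum_le_sum fun E _ => by split_ifs; exacts [h E, le_rfl]

theorem wDeg_nonneg {G : Finset ℤ} {w : Finset ℤ → ℝ} (h : ∀ E, 0 ≤ w E) (S : Finset ℤ) :
    0 ≤ wDeg G w S :=
  Finset.sum_nonneg fun E _ => by split_ifs; exacts [h E, le_rfl]

theorem wDeg_lk {G : Finset ℤ} (g : Finset ℤ → ℝ) {v : ℤ} (hv : v ∈ G) {X : Finset ℤ} (hX : v ∉ X) :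
    wDeg G (lk g v) X = wDeg G g (insert v X) := by
  unfold wDeg
  rw [← Finset.insert_erase hv, Finset.sum_powerset_insert (Finset.notMem_erase v G),
    Finset.sum_powerset_insert (Finset.notMem_erase v G)]
  have hE : ∀ E ∈ (G.erase v).powerset, v ∉ E := fun E hE h =>
    Finset.notMem_erase v G (mem_powerset.1 hE h)
  have h1 : ∑ t ∈ (G.erase v).powerset, (if X ⊆ insert v t then lk g v (insert v t) else 0) = 0 := by
    apply Finset.sum_eq_zero
    intro E _
    simp [lk]
  have h2 : ∑ t ∈ (G.erase v).powerset, (if insert v X ⊆ t then g t else 0) = 0 := by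
    apply Finset.sum_eq_zero
    intro E hE'
    rw [if_neg]
    intro h
    exact hE E hE' (h (mem_insert_self _ _))
  rw [h1, h2, add_zero, zero_add]
  apply Finset.sum_congr rfl
  intro E hE'
  have h3 : insert v X ⊆ insert v E ↔ X ⊆ E := Finset.insert_subset_insert_iff hX
  by_cases h : X ⊆ E
  · rw [if_pos h, if_pos (h3.2 h), lk, if_neg (hE E hE')]
  · rw [if_neg h, if_neg (fun h' => h (h3.1 h'))]

theorem wDeg_lk_mem {G : Finset ℤ} (g : Finset ℤ → ℝ) {v : ℤ} {X : Finset ℤ} (hX : v ∈ X) :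
    wDeg G (lk g v) X = 0 := by
  apply Finset.sum_eq_zero
  intro E _
  split_ifs with h
  · rw [lk, if_pos (h hX)]
  · rfl

theorem wDeg_add (G : Finset ℤ) (g h : Finset ℤ → ℝ) (S : Finset ℤ) :
    wDeg G (fun E => g E + h E) S = wDeg G g S + wDeg G h S := by
  unfold wDeg
  rw [← Finset.sum_add_distrib]
  exact Finset.sum_congr rfl fun E _ => by split_ifs <;> simp

theorem sum_wDeg (G : Finset ℤ) (h : Finset ℤ → ℝ) (l : ℕ) (hu : ∀ E, h E ≠ 0 → E.card = l) :
    ∑ X ∈ G.powerset, wDeg G h X = 2 ^ l * wE G h := by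
  unfold wDeg wE
  rw [Finset.sum_comm, Finset.mul_sum]
  apply Finset.sum_congr rfl
  intro E hE
  rw [← Finset.sum_filter, Finset.sum_const, nsmul_eq_mul]
  by_cases h0 : h E = 0
  · simp [h0]
  · have : G.powerset.filter (fun X => X ⊆ E) = E.powerset := by
      ext X
      simp only [mem_filter, mem_powerset]
      exact ⟨fun h => h.2, fun h => ⟨h.trans (mem_powerset.1 hE), h⟩⟩
    rw [this, card_powerset, hu E h0]
    push_cast; rfl

theorem sum_wDeg1 (G : Finset ℤ) (g : Finset ℤ → ℝ) (l : ℕ) (hu : ∀ E, g E ≠ 0 → E.card = l) :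
    ∑ v ∈ G, wDeg G g {v} = l * wE G g := by
  unfold wDeg wE
  rw [Finset.sum_comm, Finset.mul_sum]
  apply Finset.sum_congr rfl
  intro E hE
  rw [← Finset.sum_filter, Finset.sum_const, nsmul_eq_mul]
  by_cases h0 : g E = 0
  · simp [h0]
  · have : G.filter (fun v => {v} ⊆ E) = E := by
      ext v
      simp only [mem_filter, singleton_subset_iff]
      exact ⟨fun h => h.2, fun h => ⟨(mem_powerset.1 hE) h, h⟩⟩
    rw [this, hu E h0]

/-- conclusion of a container step for a family of sets -/
def wConcl (G : Finset ℤ) (Good : Finset ℤ → Prop) (s δ : ℝ) : Prop :=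
  ∃ S D : Finset ℤ → Finset ℤ, ∀ I, Good I → S I ⊆ I ∧ ((S I).card : ℝ) ≤ s ∧ Disjoint (D I) I ∧
    D I ⊆ G ∧ δ ≤ ((D I).card : ℝ) ∧ ∀ J, S I ⊆ J → J ⊆ I → S J = S I ∧ D J = D I

theorem wConcl_mono {G : Finset ℤ} {P Q : Finset ℤ → Prop} {s s' δ δ' : ℝ} (h : wConcl G P s δ)
    (hPQ : ∀ I, Q I → P I) (hs : s ≤ s') (hδ : δ' ≤ δ) : wConcl G Q s' δ' := by
  obtain ⟨S, D, h⟩ := h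
  refine ⟨S, D, fun I hI => ?_⟩
  obtain ⟨h1, h2, h3, h4, h5, h6⟩ := h I (hPQ I hI)
  exact ⟨h1, h2.trans hs, h3, h4, hδ.trans h5, h6⟩

noncomputable def wMin (s : Finset ℤ) : ℤ := if h : s.Nonempty then s.min' h else 0

theorem wConcl_step {G high : Finset ℤ} (hhG : high ⊆ G) {P : Finset ℤ → Prop} {Pv : ℤ → Finset ℤ → Prop} {s δ : ℝ}
    (hs : 0 ≤ s) (hδ : δ ≤ high.card) (h : ∀ v ∈ high, wConcl G (Pv v) s δ)
    (hP : ∀ I, P I → ∀ v ∈ high, v ∈ I → Pv v I) : wConcl G P (s + 1) δ := by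
  have h' : ∀ v, ∃ S D : Finset ℤ → Finset ℤ, v ∈ high → ∀ I, Pv v I → S I ⊆ I ∧ ((S I).card : ℝ) ≤ s ∧ Disjoint (D I) I ∧
    D I ⊆ G ∧ δ ≤ ((D I).card : ℝ) ∧ ∀ J, S I ⊆ J → J ⊆ I → S J = S I ∧ D J = D I := by
    intro v
    by_cases hv : v ∈ high
    · obtain ⟨S, D, hSD⟩ := h v hv
      exact ⟨S, D, fun _ => hSD⟩
    · exact ⟨id, id, fun h => absurd h hv⟩
  choose S D hSD using h'
  refine ⟨fun I => if I ∩ high = ∅ then ∅ else insert (wMin (I ∩ high)) (S (wMin (I ∩ high)) I),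
    fun I => if I ∩ high = ∅ then high else D (wMin (I ∩ high)) I, fun I hI => ?_⟩
  by_cases hne : I ∩ high = ∅
  · simp only [hne, if_true]
    refine ⟨by simp, by simpa using by linarith, ?_, hhG, hδ, ?_⟩
    · rw [Finset.disjoint_iff_inter_eq_empty, inter_comm]; exact hne
    · intro J _ hJ
      have : J ∩ high = ∅ := Finset.subset_empty.1 (hne ▸ Finset.inter_subset_inter_right hJ)
      simp [this]
  · simp only [hne, if_false]
    have hn : (I ∩ high).Nonempty := Finset.nonempty_iff_ne_empty.2 hne
    have hmem : wMin (I ∩ high) ∈ I ∩ high := by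
      rw [wMin, dif_pos hn]; exact Finset.min'_mem _ _
    have hmem' := mem_inter.1 hmem
    obtain ⟨h1, h2, h3, h4, h5, h6⟩ := hSD _ hmem'.2 I (hP I hI _ hmem'.2 hmem'.1)
    refine ⟨insert_subset hmem'.1 h1, ?_, h3, h4, h5, ?_⟩
    · have := Finset.card_insert_le (wMin (I ∩ high)) (S (wMin (I ∩ high)) I)
      have h7 : ((insert (wMin (I ∩ high)) (S (wMin (I ∩ high)) I)).card : ℝ) ≤
        ((S (wMin (I ∩ high)) I).card : ℝ) + 1 := by exact_mod_cast this
      linarith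
    · intro J hJ1 hJ2
      have hvJ : wMin (I ∩ high) ∈ J := hJ1 (mem_insert_self _ _)
      have hvJ' : wMin (I ∩ high) ∈ J ∩ high := mem_inter.2 ⟨hvJ, hmem'.2⟩
      have hJn : (J ∩ high).Nonempty := ⟨_, hvJ'⟩
      have hmin : wMin (J ∩ high) = wMin (I ∩ high) := by
        apply le_antisymm
        · conv_lhs => rw [wMin, dif_pos hJn]
          exact Finset.min'_le _ _ hvJ'
        · rw [wMin, dif_pos hn, wMin, dif_pos hJn]
          exact Finset.min'_subset hJn (Finset.inter_subset_inter_right hJ2)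
      have hJne : J ∩ high ≠ ∅ := Finset.nonempty_iff_ne_empty.1 hJn
      simp only [hJne, if_false, hmin]
      obtain ⟨h7, h8⟩ := h6 J ((subset_insert _ _).trans hJ1) hJ2
      rw [h7, h8]
      exact ⟨rfl, rfl⟩

def wHyp (l : ℕ) (K n p : ℝ) (G : Finset ℤ) (w : Finset ℤ → ℝ) : Prop :=
  (G.card : ℝ) ≤ n ∧ 0 < p ∧ p ≤ 1 ∧ 1 ≤ p * n ∧ (∀ E, 0 ≤ w E) ∧ (∀ E, w E ≠ 0 → E.card = l) ∧
  0 < wE G w ∧ ∀ X : Finset ℤ, X.Nonempty → wDeg G w X ≤ K * p ^ (X.card - 1) * wE G w / n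

theorem high_card {l : ℕ} {K n p : ℝ} (hK : 0 < K) {G : Finset ℤ} {w g h : Finset ℤ → ℝ} (hw : wHyp (l + 1) K n p G w)
    (hh0 : ∀ E, 0 ≤ h E) (hhu : ∀ E, h E ≠ 0 → E.card = l)
    (hg : g = fun E => if ∃ X ⊆ E, X.Nonempty ∧ K * p ^ X.card * wE G w / n ≤ wDeg G h X then 0 else w E)
    (hsmall : wE G h < 1 / 2 ^ (l + 2) * p * wE G w) :
    1 / (2 * K) * n ≤ ((G.filter (fun v => wE G w / (4 * n) ≤ wDeg G g {v})).card : ℝ) := by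
  obtain ⟨hGn, hp0, hp1, hpn, hw0, hwu, he, hdeg⟩ := hw
  have hn0 : 0 < n := by
    by_contra hcon
    push Not at hcon
    nlinarith
  set e := wE G w with hedef
  have hgw : ∀ E, g E ≤ w E := by
    intro E; rw [hg]; simp only []; split_ifs; exacts [hw0 E, le_rfl]
  have hgu : ∀ E, g E ≠ 0 → E.card = l + 1 := by
    intro E hE
    apply hwu
    intro h0
    apply hE
    rw [hg]; simp only [h0, ite_self]
  -- killed weight
  have hkill : e - wE G g ≤ e / 4 := by
    have h1 : e - wE G g ≤ ∑ E ∈ G.powerset, ∑ X ∈ G.powerset, (if X ⊆ E then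
        (if X.Nonempty ∧ K * p ^ X.card * e / n ≤ wDeg G h X then w E else 0) else 0) := by
      rw [hedef, wE, wE, ← Finset.sum_sub_distrib]
      apply Finset.sum_le_sum
      intro E hE
      have hnn : ∀ X ∈ G.powerset, 0 ≤ (if X ⊆ E then
        (if X.Nonempty ∧ K * p ^ X.card * e / n ≤ wDeg G h X then w E else 0) else 0) := by
        intro X _
        split_ifs
        exacts [hw0 E, le_rfl, le_rfl]
      rw [hg]
      simp only []
      split_ifs with hX
      · obtain ⟨X, hXE, hX1, hX2⟩ := hX
        rw [sub_zero]
        refine le_trans (le_of_eq ?_) (Finset.single_le_sum hnn (mem_powerset.2 (hXE.trans (mem_powerset.1 hE))))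
        rw [if_pos hXE, if_pos ⟨hX1, hX2⟩]
      · rw [sub_self]
        exact Finset.sum_nonneg hnn
    have h2 : ∑ E ∈ G.powerset, ∑ X ∈ G.powerset, (if X ⊆ E then
        (if X.Nonempty ∧ K * p ^ X.card * e / n ≤ wDeg G h X then w E else 0) else 0) ≤
        ∑ X ∈ G.powerset, wDeg G h X / p := by
      rw [Finset.sum_comm]
      apply Finset.sum_le_sum
      intro X _
      by_cases hX : X.Nonempty ∧ K * p ^ X.card * e / n ≤ wDeg G h X
      · have h3 := hdeg X hX.1
        simp only [hX, and_self, if_true]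
        change wDeg G w X ≤ _
        refine h3.trans ?_
        rw [le_div_iff₀ hp0]
        refine le_trans (le_of_eq ?_) hX.2
        have : X.card = (X.card - 1) + 1 := by have := hX.1.card_pos; omega
        conv_rhs => rw [this, pow_succ]
        ring
      · simp only [hX, if_false, ite_self, Finset.sum_const_zero]
        exact div_nonneg (wDeg_nonneg hh0 X) hp0.le
    rw [← Finset.sum_div, sum_wDeg G h l hhu] at h2
    refine h1.trans (h2.trans ?_)
    rw [div_le_iff₀ hp0]
    have : (2:ℝ) ^ l * wE G h ≤ 2 ^ l * (1 / 2 ^ (l + 2) * p * e) := by gcongr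
    refine this.trans (le_of_eq ?_)
    field_simp
    ring
  have hsum := sum_wDeg1 G g (l + 1) hgu
  have hlow : 3 / 4 * e ≤ ∑ v ∈ G, wDeg G g {v} := by
    rw [hsum]
    have : 0 ≤ wE G g := by linarith
    push_cast
    nlinarith [mul_nonneg (Nat.cast_nonneg (α := ℝ) l) this]
  have hup : ∑ v ∈ G, wDeg G g {v} ≤ ∑ v ∈ G, ((if e / (4 * n) ≤ wDeg G g {v} then K * e / n else 0) + e / (4 * n)) := by
    apply Finset.sum_le_sum
    intro v _
    have h1 : wDeg G g {v} ≤ K * e / n := by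
      have := (wDeg_mono (G := G) hgw {v}).trans (hdeg {v} (singleton_nonempty v))
      simpa using this
    have h2 : 0 ≤ e / (4 * n) := by positivity
    split_ifs with h3
    · linarith
    · push Not at h3; linarith
  rw [Finset.sum_add_distrib, ← Finset.sum_filter, Finset.sum_const, Finset.sum_const, nsmul_eq_mul, nsmul_eq_mul] at hup
  have h3 : (G.card : ℝ) * (e / (4 * n)) ≤ e / 4 := by
    calc _ ≤ n * (e / (4 * n)) := by gcongr
      _ = _ := by field_simp
  have h4 : 1 / 2 * e ≤ ((G.filter (fun v => e / (4 * n) ≤ wDeg G g {v})).card : ℝ) * (K * e / n) := by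
    linarith
  have h5 : ((G.filter (fun v => e / (4 * n) ≤ wDeg G g {v})).card : ℝ) * (K * e / n) =
    (((G.filter (fun v => e / (4 * n) ≤ wDeg G g {v})).card : ℝ) * K / n) * e := by ring
  rw [h5] at h4
  have h6 := le_of_mul_le_mul_right h4 he
  rw [le_div_iff₀ hn0] at h6
  rw [one_div_mul_eq_div, div_le_iff₀ (by positivity)]
  linarith

theorem container_inner {l : ℕ} {K n p T' δ' δ : ℝ} (hK : 0 < K) (hT' : 0 ≤ T') {G : Finset ℤ} {w : Finset ℤ → ℝ}
    (hw : wHyp (l + 1) K n p G w) (hδ' : δ ≤ δ') (hδK : δ ≤ 1 / (2 * K))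
    (IH : ∀ h, wHyp l (2 * K / (1 / 2 ^ (l + 2))) n p G h → wConcl G (wInd G h) (T' * p * n) (δ' * n)) :
    ∀ j : ℕ, ∀ h : Finset ℤ → ℝ, (∀ E, 0 ≤ h E) → (∀ E, h E ≠ 0 → E.card = l) →
      (∀ X : Finset ℤ, X.Nonempty → wDeg G h X ≤ 2 * K * p ^ X.card * wE G w / n) →
      1 / 2 ^ (l + 2) * p * wE G w ≤ wE G h + j * (wE G w / (4 * n)) →
      wConcl G (fun I => wInd G w I ∧ wInd G h I) (T' * p * n + j) (δ * n) := by
  have hw' := hw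
  obtain ⟨hGn, hp0, hp1, hpn, hw0, hwu, he, hdeg⟩ := hw
  have hn0 : 0 < n := by
    by_contra hcon
    push Not at hcon
    nlinarith
  have hc : (0:ℝ) < 1 / 2 ^ (l + 2) := by positivity
  set c : ℝ := 1 / 2 ^ (l + 2) with hcdef
  intro j
  induction j with
  | zero =>
    intro h hh0 hhu hhd hbig
    simp only [Nat.cast_zero, zero_mul, add_zero] at hbig ⊢
    refine wConcl_mono (IH h ⟨hGn, hp0, hp1, hpn, hh0, hhu, lt_of_lt_of_le (by positivity) hbig, ?_⟩) (fun I hI => hI.2) le_rfl (by gcongr)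
    intro X hX
    refine (hhd X hX).trans ?_
    have : X.card = (X.card - 1) + 1 := by have := hX.card_pos; omega
    calc 2 * K * p ^ X.card * wE G w / n = 2 * K / c * p ^ (X.card - 1) * (c * p * wE G w) / n := by
          conv_lhs => rw [this, pow_succ]
          field_simp
      _ ≤ _ := by gcongr
  | succ j ih =>
    intro h hh0 hhu hhd hbig
    by_cases hs : c * p * wE G w ≤ wE G h
    · refine wConcl_mono (ih h hh0 hhu hhd ?_) (fun I hI => hI) (by push_cast; linarith) le_rfl
      have : 0 ≤ (j:ℝ) * (wE G w / (4 * n)) := by positivity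
      linarith
    push Not at hs
    set g : Finset ℤ → ℝ := fun E => if ∃ X ⊆ E, X.Nonempty ∧ K * p ^ X.card * wE G w / n ≤ wDeg G h X then 0 else w E with hg
    have hhigh := high_card hK hw' hh0 hhu hg hs
    have hg0 : ∀ E, 0 ≤ g E := by
      intro E; simp only [hg]; split_ifs; exacts [le_rfl, hw0 E]
    have hgw : ∀ E, g E ≤ w E := by
      intro E; simp only [hg]; split_ifs; exacts [hw0 E, le_rfl]
    have hgwz : ∀ E, w E = 0 → g E = 0 := fun E h0 => le_antisymm (h0 ▸ hgw E) (hg0 E)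
    have key := wConcl_step (G := G) (high := G.filter (fun v => wE G w / (4 * n) ≤ wDeg G g {v}))
      (filter_subset _ _) (P := fun I => wInd G w I ∧ wInd G h I)
      (Pv := fun v I => wInd G w I ∧ wInd G (fun E => h E + lk g v E) I) (s := T' * p * n + j) (δ := δ * n)
      (by positivity) ((by gcongr : δ * n ≤ 1 / (2 * K) * n).trans hhigh) ?_ ?_
    · refine wConcl_mono key (fun I hI => hI) (by push_cast; linarith) le_rfl
    · intro v hv
      obtain ⟨hvG, hvd⟩ := mem_filter.1 hv
      apply ih
      · intro E
        have : 0 ≤ lk g v E := by unfold lk; split_ifs; exacts [le_rfl, hg0 _]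
        have := hh0 E
        positivity
      · intro E hE
        by_cases h0 : h E = 0
        · rw [h0, zero_add] at hE
          unfold lk at hE
          split_ifs at hE with h1
          · exact absurd rfl hE
          · have h2 := hwu (insert v E) (fun h3 => hE (hgwz _ h3))
            rw [card_insert_of_notMem h1] at h2
            omega
        · exact hhu E h0
      · intro X hX
        rw [wDeg_add]
        by_cases hvX : v ∈ X
        · rw [wDeg_lk_mem g hvX, add_zero]; exact hhd X hX
        rw [wDeg_lk g hvG hvX]
        by_cases hsat : K * p ^ X.card * wE G w / n ≤ wDeg G h X
        · have : wDeg G g (insert v X) = 0 := by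
            apply Finset.sum_eq_zero
            intro E _
            split_ifs with h1
            · simp only [hg]
              rw [if_pos ⟨X, (subset_insert _ _).trans h1, hX, hsat⟩]
            · rfl
          rw [this, add_zero]; exact hhd X hX
        · push Not at hsat
          have h1 := (wDeg_mono (G := G) hgw (insert v X)).trans (hdeg (insert v X) (insert_nonempty _ _))
          rw [card_insert_of_notMem hvX, Nat.add_sub_cancel] at h1
          have : 2 * K * p ^ X.card * wE G w / n = K * p ^ X.card * wE G w / n + K * p ^ X.card * wE G w / n := by ring
          rw [this]
          exact add_le_add hsat.le h1
      · rw [← wDeg_empty G (fun E => h E + lk g v E), wDeg_add, wDeg_lk g hvG (by simp), wDeg_empty]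
        have : (insert v ∅ : Finset ℤ) = {v} := by simp
        rw [this]
        push_cast at hbig
        linarith
    · intro I hI v hv hvI
      obtain ⟨hvG, hvd⟩ := mem_filter.1 hv
      refine ⟨hI.1, fun E hE hEI => ?_⟩
      simp only
      rw [hI.2 E hE hEI, zero_add]
      unfold lk
      split_ifs with h1
      · rfl
      · exact hgwz _ (hI.1 _ (mem_powerset.2 (insert_subset hvG (mem_powerset.1 hE))) (insert_subset hvI hEI))

theorem container (l : ℕ) : ∀ K : ℝ, 0 < K → ∃ T : ℝ, 0 ≤ T ∧ ∃ δ : ℝ, 0 < δ ∧ ∀ n p G w, wHyp l K n p G w →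
    wConcl G (wInd G w) (T * p * n) (δ * n) := by
  induction l with
  | zero =>
    intro K hK
    refine ⟨0, le_rfl, 1, one_pos, ?_⟩
    rintro n p G w ⟨hGn, hp0, hp1, hpn, hw0, hwu, he, hdeg⟩
    refine ⟨id, id, fun I hI => ?_⟩
    exfalso
    have : wE G w = 0 := by
      apply Finset.sum_eq_zero
      intro E hE
      by_contra h0
      have h1 := card_eq_zero.1 (hwu E h0)
      exact h0 (hI E hE (by rw [h1]; simp))
    linarith
  | succ l ih =>
    intro K hK
    obtain ⟨T', hT', δ', hδ', H⟩ := ih (2 * K / (1 / 2 ^ (l + 2))) (by positivity)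
    refine ⟨T' + 4 * (1 / 2 ^ (l + 2)) + 1, by positivity, min δ' (1 / (2 * K)), lt_min hδ' (by positivity), ?_⟩
    intro n p G w hw
    have h1 := container_inner hK hT' hw (min_le_left _ _) (min_le_right _ _) (fun h hh => H n p G h hh)
      ⌈4 * (1 / 2 ^ (l + 2)) * p * n⌉₊ (fun _ => 0) (by simp) (by simp)
    obtain ⟨hGn, hp0, hp1, hpn, hw0, hwu, he, hdeg⟩ := hw
    have hn0 : 0 < n := by
      by_contra hcon
      push Not at hcon
      nlinarith
    have h2 := Nat.le_ceil (4 * (1 / 2 ^ (l + 2)) * p * n)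
    have h3 := Nat.ceil_lt_add_one (show 0 ≤ 4 * (1 / 2 ^ (l + 2)) * p * n by positivity)
    refine wConcl_mono (h1 ?_ ?_) (fun I hI => ⟨hI, fun E _ _ => rfl⟩) ?_ le_rfl
    · intro X hX
      have : wDeg G (fun _ => 0) X = 0 := by simp [wDeg]
      rw [this]
      positivity
    · have : 1 / 2 ^ (l + 2) * p * wE G w = (4 * (1 / 2 ^ (l + 2)) * p * n) * (wE G w / (4 * n)) := by
        field_simp
      rw [this]
      simp only [wE, Finset.sum_const_zero, zero_add]
      apply mul_le_mul_of_nonneg_right h2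
      have : 0 ≤ wE G w / (4 * n) := by positivity
      exact this
    · nlinarith

theorem wDeg_subset {G U : Finset ℤ} (hU : U ⊆ G) {w : Finset ℤ → ℝ} (hw0 : ∀ E, 0 ≤ w E) (X : Finset ℤ) :
    wDeg U w X ≤ wDeg G w X :=
  Finset.sum_le_sum_of_subset_of_nonneg (powerset_mono.2 hU) fun E _ _ => by
    split_ifs; exacts [hw0 E, le_rfl]

theorem iter_cont {l : ℕ} {K n p c T δ b M : ℝ} (hK : 0 < K) (hc : 0 < c) (hM : 0 < M) (hT : 0 ≤ T)
    (H : ∀ U w, wHyp l (K / c) n p U w → wConcl U (wInd U w) (T * p * n) (δ * n))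
    {G : Finset ℤ} {w : Finset ℤ → ℝ} (hGn : (G.card : ℝ) ≤ n) (hp0 : 0 < p) (hp1 : p ≤ 1) (hpn : 1 ≤ p * n)
    (hw0 : ∀ E, 0 ≤ w E) (hwu : ∀ E, w E ≠ 0 → E.card = l)
    (hdeg : ∀ X : Finset ℤ, X.Nonempty → wDeg G w X ≤ K * p ^ (X.card - 1) * M / n)
    (hsup : ∀ U ⊆ G, b ≤ U.card → c * M ≤ wE U w) :
    ∀ j : ℕ, ∀ U ⊆ G, (U.card : ℝ) ≤ b + j * (δ * n) → ∃ S C : Finset ℤ → Finset ℤ, ∀ I, wInd G w I → I ⊆ U →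
      S I ⊆ I ∧ ((S I).card : ℝ) ≤ j * (T * p * n) ∧ I ⊆ C I ∧ ((C I).card : ℝ) ≤ b ∧
      ∀ J, S I ⊆ J → J ⊆ I → S J = S I ∧ C J = C I := by
  have hn0 : 0 < n := by
    by_contra hcon
    push Not at hcon
    nlinarith
  intro j
  induction j with
  | zero =>
    intro U hU hUc
    refine ⟨fun _ => ∅, fun _ => U, fun I hI hIU => ⟨by simp, by simp, hIU, by simpa using hUc, fun J _ _ => ⟨rfl, rfl⟩⟩⟩
  | succ j ih =>
    intro U hU hUc
    by_cases hb : (U.card : ℝ) ≤ b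
    · refine ⟨fun _ => ∅, fun _ => U, fun I hI hIU => ⟨by simp, ?_, hIU, hb, fun J _ _ => ⟨rfl, rfl⟩⟩⟩
      simp only [card_empty, Nat.cast_zero]
      positivity
    push Not at hb
    have he := hsup U hU hb.le
    obtain ⟨S0, D0, h0⟩ := H U w ⟨le_trans (by exact_mod_cast card_le_card hU) hGn, hp0, hp1, hpn, hw0, hwu,
      lt_of_lt_of_le (by positivity) he, fun X hX => by
        refine (wDeg_subset hU hw0 X).trans ((hdeg X hX).trans ?_)
        calc K * p ^ (X.card - 1) * M / n = K / c * p ^ (X.card - 1) * (c * M) / n := by field_simp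
          _ ≤ _ := by gcongr⟩
    have h' : ∀ D : Finset ℤ, ∃ S C : Finset ℤ → Finset ℤ, D ⊆ U → δ * n ≤ D.card → ∀ I, wInd G w I → I ⊆ U \ D →
      S I ⊆ I ∧ ((S I).card : ℝ) ≤ j * (T * p * n) ∧ I ⊆ C I ∧ ((C I).card : ℝ) ≤ b ∧
      ∀ J, S I ⊆ J → J ⊆ I → S J = S I ∧ C J = C I := by
      intro D
      by_cases hD : D ⊆ U ∧ δ * n ≤ D.card
      · obtain ⟨S, C, hSC⟩ := ih (U \ D) (sdiff_subset.trans hU) (by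
          have := card_sdiff_add_card_eq_card hD.1
          have h2 : ((U \ D).card : ℝ) + D.card = U.card := by exact_mod_cast this
          push_cast at hUc
          linarith [hD.2])
        exact ⟨S, C, fun _ _ => hSC⟩
      · exact ⟨id, id, fun h1 h2 => absurd ⟨h1, h2⟩ hD⟩
    choose S C hSC using h'
    refine ⟨fun I => S0 I ∪ S (D0 I) I, fun I => C (D0 I) I, fun I hI hIU => ?_⟩
    obtain ⟨h1, h2, h3, h4, h5, h6⟩ := h0 I (fun E hE => hI E (mem_powerset.2 ((mem_powerset.1 hE).trans hU)))
    obtain ⟨g1, g2, g3, g4, g5⟩ := hSC (D0 I) h4 h5 I hI (fun x hx => mem_sdiff.2 ⟨hIU hx, fun hx' =>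
      (disjoint_left.1 h3 hx') hx⟩)
    refine ⟨union_subset h1 g1, ?_, g3, g4, ?_⟩
    · have : (((S0 I ∪ S (D0 I) I).card : ℕ) : ℝ) ≤ (S0 I).card + (S (D0 I) I).card := by
        exact_mod_cast card_union_le _ _
      push_cast
      linarith
    · intro J hJ1 hJ2
      obtain ⟨e1, e2⟩ := h6 J (subset_union_left.trans hJ1) hJ2
      obtain ⟨e3, e4⟩ := g5 J (subset_union_right.trans hJ1) hJ2
      simp only [e1, e2, e3, e4, and_self]

theorem fam_card {G : Finset ℤ} {P : Finset ℤ → Prop} {S C : Finset ℤ → Finset ℤ} {s0 b t : ℕ}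
    (h : ∀ I, P I → I ⊆ G → S I ⊆ I ∧ (S I).card ≤ s0 ∧ I ⊆ C I ∧ (C I).card ≤ b ∧
      ∀ J, S I ⊆ J → J ⊆ I → S J = S I ∧ C J = C I) (hs : s0 ≤ t) :
    (G.powerset.filter (fun F => F.card = t ∧ P F)).card ≤
      ∑ s ∈ range (s0 + 1), G.card.choose s * b.choose (t - s) := by
  set C' : Finset ℤ → Finset ℤ := fun X => if (C X).card ≤ b then C X else ∅ with hC'
  have hsub : G.powerset.filter (fun F => F.card = t ∧ P F) ⊆ (range (s0 + 1)).biUnion (fun s =>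
      (powersetCard s G).biUnion (fun X => (powersetCard (t - s) (C' X)).image (fun Y => X ∪ Y))) := by
    intro F hF
    obtain ⟨hFG, hFt, hFP⟩ := mem_filter.1 hF
    rw [mem_powerset] at hFG
    obtain ⟨h1, h2, h3, h4, h5⟩ := h F hFP hFG
    obtain ⟨e1, e2⟩ := h5 (S F) subset_rfl h1
    rw [mem_biUnion]
    refine ⟨(S F).card, mem_range.2 (by omega), mem_biUnion.2 ⟨S F, mem_powersetCard.2 ⟨h1.trans hFG, rfl⟩, mem_image.2
      ⟨F \ S F, mem_powersetCard.2 ⟨?_, ?_⟩, by rw [union_sdiff_of_subset h1]⟩⟩⟩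
    · simp only [hC', e2, h4, if_true]
      exact sdiff_subset.trans h3
    · rw [card_sdiff_of_subset h1, hFt]
  refine (card_le_card hsub).trans (card_biUnion_le.trans (Finset.sum_le_sum fun s _ => ?_))
  rw [← card_powersetCard]
  refine Finset.card_biUnion_le_card_mul _ _ _ fun X _ => ?_
  refine card_image_le.trans ?_
  rw [card_powersetCard]
  apply Nat.choose_le_choose
  simp only [hC']
  split_ifs with h1
  · exact h1
  · simp

-- counting
theorem choose_mul64 (b j : ℕ) : ∀ j, 64 ^ j * b.choose j ≤ (64 * b).choose j := by
  intro j
  induction j with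
  | zero => simp
  | succ j ih =>
    have h1 := Nat.choose_succ_right_eq b j
    have h2 := Nat.choose_succ_right_eq (64 * b) j
    have h3 : 64 * (b - j) ≤ 64 * b - j := by omega
    have h4 : 64 ^ (j+1) * b.choose (j+1) * (j+1) ≤ (64 * b).choose (j+1) * (j+1) := by
      rw [mul_assoc, h1, h2, pow_succ]
      calc 64 ^ j * 64 * (b.choose j * (b - j)) = (64 ^ j * b.choose j) * (64 * (b - j)) := by ring
        _ ≤ _ := Nat.mul_le_mul ih h3
    exact Nat.le_of_mul_le_mul_right h4 (by omega)

theorem choose_ratio (n b g : ℕ) (hg : 2 * n ≤ g * b) (hg1 : 1 ≤ g): ∀ s, 2 * s ≤ b + 2 → n.choose s ≤ g ^ s * b.choose s := by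
  intro s
  induction s with
  | zero => simp
  | succ s ih =>
    intro hs
    have h1 := Nat.choose_succ_right_eq n s
    have h2 := Nat.choose_succ_right_eq b s
    have h3 : n - s ≤ g * (b - s) := by
      obtain ⟨r, hr⟩ : ∃ r, b = s + r := ⟨b - s, by omega⟩
      subst hr
      rw [Nat.add_sub_cancel_left]
      have : n ≤ g * r := by nlinarith
      omega
    have h4 : n.choose (s+1) * (s+1) ≤ (g ^ (s+1) * b.choose (s+1)) * (s+1) := by
      rw [h1, mul_assoc, h2, pow_succ]
      calc n.choose s * (n - s) ≤ (g ^ s * b.choose s) * (g * (b - s)) := Nat.mul_le_mul (ih (by omega)) h3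
        _ = _ := by ring
    exact Nat.le_of_mul_le_mul_right h4 (by omega)

theorem count_sum {n b b' g L s0 t : ℕ} (hg : 2 * n ≤ g * b) (hg1 : 1 ≤ g) (hb' : 65 * b' ≤ b) (hL : g ≤ 2 ^ L) (hL1 : 2 ≤ L)
    (hs : L * s0 ≤ t) (ht1 : 1 ≤ t):
    ∑ s ∈ range (s0 + 1), n.choose s * b'.choose (t - s) ≤ b.choose t := by
  have hs0 : 2 * s0 ≤ t := le_trans (Nat.mul_le_mul_right _ hL1) hs
  have key : ∀ s ∈ range (s0 + 1), 2 ^ t * (n.choose s * b'.choose (t - s)) ≤ b.choose t := by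
    intro s hs'
    rw [mem_range] at hs'
    by_cases hz : b' < t - s
    · rw [Nat.choose_eq_zero_of_lt hz]; simp
    push Not at hz
    have hsb : s ≤ b' := by omega
    have h1 := choose_ratio n b g hg hg1 s (by omega)
    have h2 := choose_mul64 b' 0 (t - s)
    have h3 : (64 * b').choose (t - s) ≤ (b - s).choose (t - s) := Nat.choose_le_choose _ (by omega)
    have h4 := Nat.choose_mul (n := b) (k := t) (s := s) (by omega)
    have h5 : t.choose s ≤ 2 ^ t := Nat.choose_le_two_pow _ _
    have h6 : g ^ s ≤ 2 ^ t := by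
      calc g ^ s ≤ (2 ^ L) ^ s := Nat.pow_le_pow_left hL _
        _ = 2 ^ (L * s) := by rw [pow_mul]
        _ ≤ _ := Nat.pow_le_pow_right (by norm_num) (le_trans (Nat.mul_le_mul_left _ (by omega)) hs)
    have h7 : 2 ^ t * (2 ^ t * 2 ^ t) ≤ 64 ^ (t - s) := by
      rw [show (64:ℕ) = 2 ^ 6 by norm_num, ← pow_mul, ← pow_add, ← pow_add]
      exact Nat.pow_le_pow_right (by norm_num) (by omega)
    have h8 : 0 < 2 ^ t * 2 ^ t := by positivity
    apply Nat.le_of_mul_le_mul_left _ h8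
    calc 2 ^ t * 2 ^ t * (2 ^ t * (n.choose s * b'.choose (t - s)))
        ≤ 2 ^ t * 2 ^ t * (2 ^ t * ((g ^ s * b.choose s) * b'.choose (t - s))) := by gcongr
      _ = (2 ^ t * (2 ^ t * 2 ^ t) * b'.choose (t - s)) * (g ^ s * b.choose s) := by ring
      _ ≤ (64 ^ (t - s) * b'.choose (t - s)) * (2 ^ t * b.choose s) := by gcongr
      _ ≤ (b - s).choose (t - s) * (2 ^ t * b.choose s) := by gcongr; exact h2.trans h3
      _ = 2 ^ t * (b.choose s * (b - s).choose (t - s)) := by ring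
      _ = 2 ^ t * (b.choose t * t.choose s) := by rw [h4]
      _ ≤ 2 ^ t * (b.choose t * 2 ^ t) := by gcongr
      _ = _ := by ring
  have h1 : 2 ^ t * ∑ s ∈ range (s0 + 1), n.choose s * b'.choose (t - s) ≤ 2 ^ t * b.choose t := by
    rw [Finset.mul_sum]
    refine (Finset.sum_le_sum key).trans ?_
    rw [Finset.sum_const, card_range, smul_eq_mul]
    gcongr
    exact le_trans (by omega) (Nat.lt_two_pow_self (n := t)).le
  exact Nat.le_of_mul_le_mul_left h1 (by positivity)
theorem hRank_one {m k : ℕ} (A : Matrix (Fin m) (Fin k) ℤ) (hrank : (A.map (Int.cast : ℤ → ℚ)).rank = m)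
    (hscc : ∀ r : Fin m, ∑ j, A r j = 0) (j0 : Fin k) : m ≤ hRank A {j0} := by
  conv_lhs => rw [← hrank]
  unfold hRank
  have : A.map (Int.cast : ℤ → ℚ) = ((A.map (Int.cast : ℤ → ℚ)).submatrix id (fun j : {j : Fin k // j ∉ ({j0} : Finset (Fin k))} => (j : Fin k))) *
      (Matrix.of fun (i : {j : Fin k // j ∉ ({j0} : Finset (Fin k))}) (j : Fin k) => if j = j0 then (-1 : ℚ) else if (i : Fin k) = j then 1 else 0) := by
    ext r j
    rw [Matrix.mul_apply]
    simp only [Matrix.map_apply, Matrix.submatrix_apply, id, Matrix.of_apply]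
    by_cases hj : j = j0
    · subst hj
      simp only [if_true, mul_neg, mul_one]
      rw [Finset.sum_neg_distrib]
      have h1 : ∑ i, (A r i : ℚ) = 0 := by exact_mod_cast congrArg (Int.cast : ℤ → ℚ) (hscc r)
      have h2 := Fintype.sum_subtype_add_sum_subtype (fun i => i ∉ ({j} : Finset (Fin k))) (fun i => (A r i : ℚ))
      rw [h1] at h2
      have h3 : ∑ i : {i // ¬ i ∉ ({j} : Finset (Fin k))}, (A r (i : Fin k) : ℚ) = A r j := by
        rw [Finset.sum_eq_single (⟨j, by simp⟩ : {i // ¬ i ∉ ({j} : Finset (Fin k))})]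
        · rintro ⟨b, hb⟩ _ hb'
          exfalso; apply hb'
          simp at hb
          simp [hb]
        · simp
      rw [h3] at h2
      linarith
    · simp only [if_neg hj]
      rw [Finset.sum_eq_single (⟨j, by simpa using hj⟩ : {i // i ∉ ({j0} : Finset (Fin k))})]
      · simp
      · rintro ⟨b, hb⟩ _ hb'
        rw [if_neg, mul_zero]
        intro h; apply hb'; exact Subtype.ext h
      · simp
  conv_lhs => rw [this]
  exact Matrix.rank_mul_le_left _ _

theorem mParam_bdd {m k : ℕ} (A : Matrix (Fin m) (Fin k) ℤ) : BddAbove {x : ℝ | ∃ B : Finset (Fin k), 2 ≤ B.card ∧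
    x = ((B.card : ℝ) - 1) / ((B.card : ℝ) - 1 + (hRank A B : ℝ) - (m : ℝ))} := by
  apply Set.Finite.bddAbove
  apply (Set.finite_range (fun B : Finset (Fin k) => ((B.card : ℝ) - 1) / ((B.card : ℝ) - 1 + (hRank A B : ℝ) - (m : ℝ)))).subset
  rintro x ⟨B, _, rfl⟩
  exact ⟨B, rfl⟩

theorem mParam_ge {m k : ℕ} (A : Matrix (Fin m) (Fin k) ℤ) (B : Finset (Fin k)) (hB : 2 ≤ B.card) :
    ((B.card : ℝ) - 1) / ((B.card : ℝ) - 1 + (hRank A B : ℝ) - (m : ℝ)) ≤ mParam A :=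
  le_csSup (mParam_bdd A) ⟨B, hB, rfl⟩

theorem mParam_one {m k : ℕ} (hk : 2 ≤ k) (A : Matrix (Fin m) (Fin k) ℤ)
    (hden : ∀ B : Finset (Fin k), 2 ≤ B.card →
      1 ≤ (B.card : ℝ) - 1 + (hRank A B : ℝ) - (m : ℝ)) : 1 ≤ mParam A := by
  have h0 : hRank A univ = 0 := by
    have : hRank A univ ≤ Fintype.card {j : Fin k // j ∉ (univ : Finset (Fin k))} := Matrix.rank_le_card_width _
    have h2 : Fintype.card {j : Fin k // j ∉ (univ : Finset (Fin k))} = 0 := by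
      rw [Fintype.card_eq_zero_iff]; exact ⟨fun x => x.2 (mem_univ _)⟩
    omega
  have hc : 2 ≤ (univ : Finset (Fin k)).card := by simpa using hk
  have h1 := mParam_ge A univ hc
  have h2 := hden univ hc
  refine le_trans ?_ h1
  rw [le_div_iff₀ (by linarith)]
  rw [h0]
  have : (0:ℝ) ≤ m := by positivity
  push_cast
  linarith

/-- weight -/
noncomputable def wA {m k : ℕ} (A : Matrix (Fin m) (Fin k) ℤ) (n : ℕ) (E : Finset ℤ) : ℝ :=
  (((wSol A (Icc 1 (n:ℤ))).filter (fun x => Function.Injective x ∧ univ.image x = E)).card : ℝ)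

theorem wE_wA {m k : ℕ} (A : Matrix (Fin m) (Fin k) ℤ) (n : ℕ) (U : Finset ℤ) (hU : U ⊆ Icc 1 (n:ℤ)) :
    wE U (wA A n) = (((wSol A U).filter (fun x => Function.Injective x)).card : ℝ) := by
  unfold wE wA
  rw [Finset.card_eq_sum_card_fiberwise (f := fun x => univ.image x) (t := U.powerset)]
  · push_cast
    apply Finset.sum_congr rfl
    intro E hE
    congr 2
    ext x
    simp only [mem_filter, mem_wSol]
    constructor
    · rintro ⟨⟨h1, h2⟩, h3, h4⟩
      exact ⟨⟨⟨fun j => mem_powerset.1 hE (h4 ▸ mem_image_of_mem x (mem_univ j)), h2⟩, h3⟩, h4⟩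
    · rintro ⟨⟨⟨h1, h2⟩, h3⟩, h4⟩
      exact ⟨⟨fun j => hU (h1 j), h2⟩, h3, h4⟩
  · intro x hx
    have := (mem_wSol.1 (mem_filter.1 (Finset.mem_coe.1 hx)).1).1
    simp only [coe_powerset, Set.mem_preimage, Set.mem_powerset_iff, Finset.coe_subset]
    intro y hy
    obtain ⟨j, _, rfl⟩ := mem_image.1 hy
    exact this j

theorem wDeg_wA {m k : ℕ} (A : Matrix (Fin m) (Fin k) ℤ) (n : ℕ) (X : Finset ℤ) :
    wDeg (Icc 1 (n:ℤ)) (wA A n) X ≤ (((wSol A (Icc 1 (n:ℤ))).filter (fun x => Function.Injective x ∧ X ⊆ univ.image x)).card : ℝ) := by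
  unfold wDeg
  rw [← Finset.sum_filter]
  unfold wA
  rw [← Nat.cast_sum, Nat.cast_le, ← Finset.card_biUnion]
  · apply card_le_card
    intro x hx
    obtain ⟨E, hE, hx⟩ := mem_biUnion.1 hx
    obtain ⟨h1, h2, h3⟩ := mem_filter.1 hx
    exact mem_filter.2 ⟨h1, h2, h3 ▸ (mem_filter.1 hE).2⟩
  · intro E _ E' _ hne
    rw [Function.onFun, disjoint_left]
    intro x hx hx'
    exact hne ((mem_filter.1 hx).2.2.symm.trans (mem_filter.1 hx').2.2)

theorem deg_bound {m k : ℕ} (hkm : m < k) (hk : 2 ≤ k) (A : Matrix (Fin m) (Fin k) ℤ)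
    (hrank : (A.map (Int.cast : ℤ → ℚ)).rank = m)
    (hscc : ∀ r : Fin m, ∑ j, A r j = 0)
    (hden : ∀ B : Finset (Fin k), 2 ≤ B.card →
      1 ≤ (B.card : ℝ) - 1 + (hRank A B : ℝ) - (m : ℝ)) (n : ℕ) (hn : 1 ≤ n) (X : Finset ℤ) (hX : X.Nonempty) :
    wDeg (Icc 1 (n:ℤ)) (wA A n) X ≤ (k:ℝ) ^ k * ((n:ℝ) ^ (-(1 / mParam A))) ^ (X.card - 1) * (n:ℝ) ^ (k - m) / n := by
  refine (wDeg_wA A n X).trans ?_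
  have hn1 : (1:ℝ) ≤ n := by exact_mod_cast hn
  have hn0 : (0:ℝ) < n := by linarith
  have hmp := mParam_one hk A hden
  set R : ℝ := ((n:ℝ) ^ (-(1 / mParam A))) ^ (X.card - 1) * (n:ℝ) ^ (k - m) / n with hR
  have hR0 : 0 ≤ R := by positivity
  have hRR : (k:ℝ) ^ k * ((n:ℝ) ^ (-(1 / mParam A))) ^ (X.card - 1) * (n:ℝ) ^ (k - m) / n = (k:ℝ)^k * R := by
    rw [hR]; ring
  rw [hRR]
  set Z := (wSol A (Icc 1 (n:ℤ))).filter (fun x => Function.Injective x ∧ X ⊆ univ.image x) with hZ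
  rcases Z.eq_empty_or_nonempty with hZe | ⟨z, hz⟩
  · rw [hZe]; simp; positivity
  have hq : X.card ≤ k := by
    have := card_le_card (mem_filter.1 hz).2.2
    refine this.trans (card_image_le.trans (by simp))
  have hsub : Z ⊆ (univ : Finset ({v // v ∈ X} → Fin k)).biUnion (fun f => (wSol A (Icc 1 (n:ℤ))).filter (fun (x : Fin k → ℤ) => ∀ v : {v // v ∈ X}, x (f v) = (v : ℤ))) := by
    intro x hx
    obtain ⟨h1, h2, h3⟩ := mem_filter.1 hx
    have : ∀ v : {v // v ∈ X}, ∃ j, x j = v := by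
      rintro ⟨v, hv⟩
      obtain ⟨j, _, hj⟩ := mem_image.1 (h3 hv)
      exact ⟨j, hj⟩
    choose f hf using this
    exact mem_biUnion.2 ⟨f, mem_univ _, mem_filter.2 ⟨h1, hf⟩⟩
  have hterm : ∀ f : {v // v ∈ X} → Fin k, (((wSol A (Icc 1 (n:ℤ))).filter (fun (x : Fin k → ℤ) => ∀ v : {v // v ∈ X}, x (f v) = (v : ℤ))).card : ℝ) ≤ R := by
    intro f
    rcases ((wSol A (Icc 1 (n:ℤ))).filter (fun (x : Fin k → ℤ) => ∀ v : {v // v ∈ X}, x (f v) = (v : ℤ))).eq_empty_or_nonempty with he | ⟨x0, hx0⟩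
    · rw [he]; simpa using hR0
    have hx0' := (mem_filter.1 hx0).2
    have hf : Function.Injective f := by
      intro u v huv
      apply Subtype.ext
      rw [← hx0' u, ← hx0' v, huv]
    have hB : (univ.image f).card = X.card := by
      rw [card_image_of_injective _ hf]; simp
    have h1 := degB A (univ.image f) x0 n hn (Icc 1 (n:ℤ)) (by simp)
    have h2 : ((wSol A (Icc 1 (n:ℤ))).filter (fun (x : Fin k → ℤ) => ∀ v : {v // v ∈ X}, x (f v) = (v : ℤ))).card ≤ n ^ (k - X.card - hRank A (univ.image f)) := by
      refine le_trans (card_le_card ?_) (h1.trans (le_of_eq ?_))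
      · intro x hx
        obtain ⟨g1, g2⟩ := mem_filter.1 hx
        refine mem_filter.2 ⟨g1, ?_⟩
        intro j hj
        obtain ⟨v, _, rfl⟩ := mem_image.1 hj
        rw [g2, hx0']
      · rw [hB]; rfl
    have h3 : (((wSol A (Icc 1 (n:ℤ))).filter (fun (x : Fin k → ℤ) => ∀ v : {v // v ∈ X}, x (f v) = (v : ℤ))).card : ℝ) ≤ (n:ℝ) ^ (k - X.card - hRank A (univ.image f)) := by
      exact_mod_cast h2
    refine h3.trans ?_
    have hw : hRank A (univ.image f) ≤ k - X.card := by
      have : hRank A (univ.image f) ≤ Fintype.card {j : Fin k // j ∉ univ.image f} := Matrix.rank_le_card_width _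
      have h2 : Fintype.card {j : Fin k // j ∉ univ.image f} = k - X.card := by
        rw [Fintype.card_subtype_compl, Fintype.card_coe, hB, Fintype.card_fin]
      omega
    have hX1 : 1 ≤ X.card := hX.card_pos
    have hexp : ((X.card : ℝ) - 1) * (1 / mParam A) ≤ (X.card : ℝ) - 1 + hRank A (univ.image f) - m := by
      by_cases h2 : 2 ≤ X.card
      · have g1 := mParam_ge A (univ.image f) (by omega)
        have g2 := hden (univ.image f) (by omega)
        rw [hB] at g1 g2
        rw [div_le_iff₀ (by linarith)] at g1
        rw [mul_one_div, div_le_iff₀ (by linarith)]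
        linarith
      · have h1 : X.card = 1 := by omega
        obtain ⟨j0, hj0⟩ := card_eq_one.1 (hB.trans h1)
        have := hRank_one A hrank hscc j0
        rw [hj0, h1]
        have : (m:ℝ) ≤ hRank A {j0} := by exact_mod_cast this
        push_cast
        linarith
    have hRe : R = (n:ℝ) ^ (-(1 / mParam A) * ((X.card - 1 : ℕ) : ℝ) + ((k - m : ℕ) : ℝ) - 1) := by
      rw [hR, Real.rpow_sub hn0, Real.rpow_add hn0, Real.rpow_one, Real.rpow_natCast, Real.rpow_mul hn0.le, Real.rpow_natCast]
    rw [hRe, ← Real.rpow_natCast]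
    apply Real.rpow_le_rpow_of_exponent_le hn1
    rw [Nat.cast_sub hw, Nat.cast_sub hq, Nat.cast_sub hX1, Nat.cast_sub hkm.le]
    push_cast
    linarith
  calc (Z.card : ℝ) ≤ ∑ f : {v // v ∈ X} → Fin k, (((wSol A (Icc 1 (n:ℤ))).filter (fun (x : Fin k → ℤ) => ∀ v : {v // v ∈ X}, x (f v) = (v : ℤ))).card : ℝ) := by
        exact_mod_cast (card_le_card hsub).trans card_biUnion_le
    _ ≤ ∑ f : {v // v ∈ X} → Fin k, R := Finset.sum_le_sum fun f _ => hterm f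
    _ = (k:ℝ) ^ X.card * R := by simp
    _ ≤ _ := by
      gcongr
      · exact_mod_cast (by omega : 1 ≤ k)
/-- counting solution-free subsets of `[1,n]` for integer linear systems. -/
theorem stmt2 (m k : ℕ) (hkm : m < k)
    (A : Matrix (Fin m) (Fin k) ℤ)
    (hrank : (A.map (Int.cast : ℤ → ℚ)).rank = m)
    (hirr : ∀ i j : Fin k, i ≠ j → ∃ x : Fin k → ℤ, A.mulVec x = 0 ∧ x i ≠ x j)
    (hscc : ∀ r : Fin m, ∑ j, A r j = 0)
    (hden : ∀ B : Finset (Fin k), 2 ≤ B.card →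
      1 ≤ (B.card : ℝ) - 1 + (hRank A B : ℝ) - (m : ℝ))
    (β : ℝ) (hβ : 0 < β) :
    ∃ C : ℝ, 0 < C ∧ ∃ n₀ : ℕ, ∀ n : ℕ, n₀ ≤ n → ∀ t : ℕ,
      C * (n : ℝ) ^ ((1:ℝ) - 1 / mParam A) ≤ (t : ℝ) →
      (((Finset.Icc (1:ℤ) (n:ℤ)).powerset.filter (fun F =>
          F.card = t ∧ ¬ ∃ x : Fin k → ℤ,
            (∀ j, x j ∈ F) ∧ Function.Injective x ∧ A.mulVec x = 0)).card : ℝ)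
        ≤ (Nat.choose ⌊β * (n : ℝ)⌋₊ t : ℝ) := by
  by_cases hk : 2 ≤ k
  swap
  · have hk1 : k = 1 := by omega
    have hm0 : m = 0 := by omega
    subst hk1 hm0
    refine ⟨1, one_pos, 1, fun n hn t ht => ?_⟩
    have htpos : 0 < t := by
      have h1 : (0:ℝ) < n := by exact_mod_cast hn
      have : (0:ℝ) < t := lt_of_lt_of_le (by positivity) ht
      exact_mod_cast this
    rw [Finset.filter_false_of_mem]
    · simp
    · rintro F _ ⟨hF, hno⟩
      apply hno
      obtain ⟨v, hv⟩ := Finset.card_pos.1 (hF ▸ htpos)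
      exact ⟨fun _ => v, fun _ => hv, fun i j _ => Subsingleton.elim i j, by funext i; exact i.elim0⟩
  have hmp := mParam_one hk A hden
  obtain ⟨c, hc, n1, hsup⟩ := supersat hkm A hrank hirr hscc (β / 200) (by positivity)
  have hk0 : (0:ℝ) < k := by exact_mod_cast (by omega : 0 < k)
  obtain ⟨T, hT, δ, hδ, hcont⟩ := container k ((k:ℝ) ^ k / c) (by positivity)
  obtain ⟨J, hJ⟩ := exists_nat_ge (1 / δ)
  obtain ⟨g, hg⟩ := exists_nat_ge (4 / β)
  obtain ⟨n2, hn2⟩ := exists_nat_ge (2 / β)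
  set L : ℕ := g + 2 with hL
  have hLpos : (0:ℝ) < L := by exact_mod_cast (by omega : 0 < L)
  refine ⟨L * (J * T + 1), by positivity, n1 + n2 + 1, fun n hn t ht => ?_⟩
  have hn1 : (1:ℝ) ≤ n := by exact_mod_cast (by omega : 1 ≤ n)
  have hn0 : (0:ℝ) < n := by linarith
  set p : ℝ := (n:ℝ) ^ (-(1 / mParam A)) with hp
  have hp0 : 0 < p := by positivity
  have hinv0 : 0 ≤ 1 / mParam A := by positivity
  have hinv1 : 1 / mParam A ≤ 1 := by rw [div_le_one (by linarith)]; exact hmp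
  have hp1 : p ≤ 1 := Real.rpow_le_one_of_one_le_of_nonpos hn1 (by linarith)
  have hpn' : p * n = (n:ℝ) ^ ((1:ℝ) - 1 / mParam A) := by
    rw [hp, ← Real.rpow_add_one hn0.ne']; congr 1; ring
  have hpn : 1 ≤ p * n := by
    rw [hpn']; exact Real.one_le_rpow hn1 (by linarith)
  rw [← hpn'] at ht
  have hGc : (((Icc 1 (n:ℤ)).card : ℕ) : ℝ) = n := by simp
  obtain ⟨S, C, hSC⟩ := iter_cont (l := k) (K := (k:ℝ)^k) (n := n) (p := p) (c := c) (T := T) (δ := δ) (b := β / 200 * n)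
    (M := (n:ℝ) ^ (k - m)) (by positivity) hc (by positivity) hT (fun U w hw => hcont n p U w hw)
    (G := Icc 1 (n:ℤ)) (w := wA A n) hGc.le hp0 hp1 hpn (fun E => by unfold wA; positivity)
    (fun E hE => by
      unfold wA at hE
      rw [Nat.cast_ne_zero, ← Nat.pos_iff_ne_zero, Finset.card_pos] at hE
      obtain ⟨x, hx⟩ := hE
      obtain ⟨_, h2, h3⟩ := mem_filter.1 hx
      rw [← h3, card_image_of_injective _ h2]; simp)
    (fun X hX => deg_bound hkm hk A hrank hscc hden n (by omega) X hX)
    (fun U hU hUc => by rw [wE_wA A n U hU]; exact hsup n (by omega) U hU hUc) J (Icc 1 (n:ℤ)) subset_rfl (by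
      rw [hGc]
      have : (n:ℝ) ≤ J * (δ * n) := by
        rw [div_le_iff₀ hδ] at hJ
        nlinarith
      have : 0 ≤ β / 200 * n := by positivity
      linarith)
  have hJT : 0 ≤ J * (T * p * n) := by positivity
  have hb0 : 0 ≤ β / 200 * n := by positivity
  have ht1 : 1 ≤ t := by
    have : (0:ℝ) < t := lt_of_lt_of_le (by positivity) ht
    exact_mod_cast this
  have hLs : L * ⌊J * (T * p * n)⌋₊ ≤ t := by
    have h1 := Nat.floor_le hJT
    have h2 : (L:ℝ) * (⌊J * (T * p * n)⌋₊ : ℝ) ≤ t := by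
      refine le_trans ?_ ht
      have h3 : (L:ℝ) * (⌊J * (T * p * n)⌋₊ : ℝ) ≤ L * (J * (T * p * n) + p * n) :=
        mul_le_mul_of_nonneg_left (by linarith) hLpos.le
      refine h3.trans (le_of_eq ?_)
      ring
    exact_mod_cast h2
  have hst : ⌊J * (T * p * n)⌋₊ ≤ t := le_trans (Nat.le_mul_of_pos_left _ (by omega)) hLs
  have hfam := fam_card (G := Icc 1 (n:ℤ)) (P := fun F => ¬ ∃ x : Fin k → ℤ,
            (∀ j, x j ∈ F) ∧ Function.Injective x ∧ A.mulVec x = 0) (S := S) (C := C)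
    (s0 := ⌊J * (T * p * n)⌋₊) (b := ⌊β / 200 * n⌋₊) (t := t) (fun I hI hIG => by
      obtain ⟨h1, h2, h3, h4, h5⟩ := hSC I (fun E hE hEI => by
        unfold wA
        rw [Nat.cast_eq_zero, Finset.card_eq_zero, Finset.filter_eq_empty_iff]
        rintro x hx ⟨hx1, hx2⟩
        exact hI ⟨x, fun j => hEI (hx2 ▸ mem_image_of_mem x (mem_univ j)), hx1, (mem_wSol.1 hx).2⟩) hIG
      exact ⟨h1, Nat.le_floor h2, h3, Nat.le_floor h4, h5⟩) hst
  have hcount := count_sum (n := n) (b := ⌊β * n⌋₊) (b' := ⌊β / 200 * n⌋₊) (g := g) (L := L)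
    (s0 := ⌊J * (T * p * n)⌋₊) (t := t) (by
      have h1 := Nat.lt_floor_add_one (β * n)
      have h2 : 2 ≤ β * n := by
        rw [div_le_iff₀ hβ] at hn2
        have : (n2:ℝ) ≤ n := by exact_mod_cast (by omega : n2 ≤ n)
        nlinarith
      have h3 : β * n / 2 ≤ (⌊β * n⌋₊ : ℝ) := by linarith
      have h4 : (2:ℝ) * n ≤ g * (⌊β * n⌋₊ : ℝ) := by
        calc (2:ℝ) * n = 4 / β * (β * n / 2) := by field_simp; ring
          _ ≤ _ := by gcongr
      exact_mod_cast h4) (by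
      have : (0:ℝ) < g := lt_of_lt_of_le (by positivity) hg
      exact_mod_cast this) (by
      apply Nat.le_floor
      have := Nat.floor_le hb0
      push_cast
      have h2 : 0 ≤ β * n := by positivity
      linarith) (by
      have := (Nat.lt_two_pow_self (n := g)).le
      exact this.trans (Nat.pow_le_pow_right (by norm_num) (by omega))) (by omega) hLs ht1
  have hGc' : (Icc 1 (n:ℤ)).card = n := by simp
  rw [hGc'] at hfam
  have := hfam.trans hcount
  exact_mod_cast this
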